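/- arXiv:math/0204106 — 3 statements merged into one kernel-verified Lean document; each statement's English description precedes it below -/
import Mathlib

section
/- Let K be a closed curve in ℝ^d and let K* be obtained from K by replacing a subarc Γ of K with the straight line segment S joining its endpoints. Then for every hyperplane P, the number of intersections of K* with P (counted by components with the stated conventions) is at most the number of intersections of K with P; consequently hₙ(K*) ⊆ hₙ(K) for all n. -/
open Set
open scoped Classical

noncomputable section

variable {E : Type*} [NormedAddCommGroup E] [NormedSpace ℝ E]

/-- The connected components of the periodic level set `Z ⊆ ℝ`, with one
canonical representative chosen per period. -/
def circComps (Z : Set ℝ) : Set (Set ℝ) :=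
  {S | ∃ t ∈ Z, S = connectedComponentIn Z t ∧ sInf S ∈ Ico (0 : ℝ) 1}

/-- The arc of the curve just after the component `S` lies above the level `c`. -/
def AboveAfter (g : ℝ → ℝ) (c : ℝ) (S : Set ℝ) : Prop :=
  ∃ ε > 0, ∀ s ∈ Ioo (sSup S) (sSup S + ε), c < g s

/-- The arc of the curve just before the component `S` lies above the level `c`. -/
def AboveBefore (g : ℝ → ℝ) (c : ℝ) (S : Set ℝ) : Prop :=
  ∃ ε > 0, ∀ s ∈ Ioo (sInf S - ε) (sInf S), c < g s

/-- A glancing intersection: the arcs just before and just after the component `S`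
lie on the same side of the level `c`; such components are counted twice. -/
def IsGlancing (g : ℝ → ℝ) (c : ℝ) (S : Set ℝ) : Prop :=
  AboveBefore g c S ↔ AboveAfter g c S

/-- Number of intersections of the closed curve `K` (a `1`-periodic map `ℝ → E`)
with the hyperplane `{x | f x = c}`: components of the preimage are counted once,
glancing components twice, and a curve contained in the hyperplane counts as two
intersections. (Infinitely many components give an infinite count.) -/
def cutCount (K : ℝ → E) (f : E →L[ℝ] ℝ) (c : ℝ) : Cardinal :=
  if {t : ℝ | f (K t) = c} = univ then 2
  else Cardinal.mk (circComps {t : ℝ | f (K t) = c})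
    + Cardinal.mk ({S ∈ circComps {t : ℝ | f (K t) = c} | IsGlancing (fun t => f (K t)) c S})

/-- `K` cuts the hyperplane `{x | f x = c}` at least `m` times. -/
def CutsAtLeast (K : ℝ → E) (f : E →L[ℝ] ℝ) (c : ℝ) (m : ℕ) : Prop :=
  (m : Cardinal) ≤ cutCount K f c

/-- The `n`-th hull of the closed curve `K`: points `p` such that every hyperplane
through `p` is cut at least `2n` times by `K`. -/
def hull (K : ℝ → E) (n : ℕ) : Set E :=
  {p | ∀ f : E →L[ℝ] ℝ, f ≠ 0 → CutsAtLeast K f (f p) (2 * n)}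

/-! ### Elementary description of components -/

/-- zeros do not extend to the left of `p` -/
def LeftEnd (g : ℝ → ℝ) (c p : ℝ) : Prop := ∀ l < p, ∃ x ∈ Ioo l p, g x ≠ c

/-- zeros do not extend to the right of `q` -/
def RightEnd (g : ℝ → ℝ) (c q : ℝ) : Prop := ∀ r > q, ∃ x ∈ Ioo q r, g x ≠ c

/-- germ version of `AboveBefore` -/
def AbB (g : ℝ → ℝ) (c p : ℝ) : Prop := ∃ l < p, ∀ s ∈ Ioo l p, c < g s

/-- germ version of `AboveAfter` -/
def AbA (g : ℝ → ℝ) (c q : ℝ) : Prop := ∃ r > q, ∀ s ∈ Ioo q r, c < g s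

/-- `[p,q]` is a component of the level set -/
structure IsComp (g : ℝ → ℝ) (c p q : ℝ) : Prop where
  le : p ≤ q
  zero : ∀ x ∈ Icc p q, g x = c
  left : LeftEnd g c p
  right : RightEnd g c q

lemma isGlancing_Icc {g : ℝ → ℝ} {c p q : ℝ} (h : p ≤ q) :
    IsGlancing g c (Icc p q) ↔ (AbB g c p ↔ AbA g c q) := by
  unfold IsGlancing AboveBefore AboveAfter AbB AbA
  rw [csInf_Icc h, csSup_Icc h]
  have h1 : (∃ ε > 0, ∀ s ∈ Ioo (p - ε) p, c < g s) ↔ ∃ l < p, ∀ s ∈ Ioo l p, c < g s := by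
    constructor
    · rintro ⟨ε, he, hs⟩
      exact ⟨p - ε, by linarith, hs⟩
    · rintro ⟨l, hl, hs⟩
      exact ⟨p - l, by linarith, by simpa using hs⟩
  have h2 : (∃ ε > 0, ∀ s ∈ Ioo q (q + ε), c < g s) ↔ ∃ r > q, ∀ s ∈ Ioo q r, c < g s := by
    constructor
    · rintro ⟨ε, he, hs⟩
      exact ⟨q + ε, by linarith, hs⟩
    · rintro ⟨l, hl, hs⟩
      exact ⟨l - q, by linarith, by simpa using hs⟩
  rw [h1, h2]

lemma LeftEnd.congr {g g' : ℝ → ℝ} {c p l : ℝ} (h : LeftEnd g c p) (hl : l < p)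
    (he : ∀ x ∈ Ioo l p, g x = g' x) : LeftEnd g' c p := by
  intro m hm
  obtain ⟨x, hx, hg⟩ := h (max l m) (max_lt hl hm)
  refine ⟨x, ⟨(le_max_right _ _).trans_lt hx.1, hx.2⟩, ?_⟩
  rwa [← he x ⟨(le_max_left _ _).trans_lt hx.1, hx.2⟩]

lemma RightEnd.congr {g g' : ℝ → ℝ} {c q r : ℝ} (h : RightEnd g c q) (hr : q < r)
    (he : ∀ x ∈ Ioo q r, g x = g' x) : RightEnd g' c q := by
  intro m hm
  obtain ⟨x, hx, hg⟩ := h (min r m) (lt_min hr hm)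
  refine ⟨x, ⟨hx.1, hx.2.trans_le (min_le_right _ _)⟩, ?_⟩
  rwa [← he x ⟨hx.1, hx.2.trans_le (min_le_left _ _)⟩]

lemma AbB.congr {g g' : ℝ → ℝ} {c p l : ℝ} (h : AbB g c p) (hl : l < p)
    (he : ∀ x ∈ Ioo l p, g x = g' x) : AbB g' c p := by
  obtain ⟨m, hm, h⟩ := h
  refine ⟨max l m, max_lt hl hm, fun s hs => ?_⟩
  rw [← he s ⟨(le_max_left _ _).trans_lt hs.1, hs.2⟩]
  exact h s ⟨(le_max_right _ _).trans_lt hs.1, hs.2⟩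

lemma AbA.congr {g g' : ℝ → ℝ} {c q r : ℝ} (h : AbA g c q) (hr : q < r)
    (he : ∀ x ∈ Ioo q r, g x = g' x) : AbA g' c q := by
  obtain ⟨m, hm, h⟩ := h
  refine ⟨min r m, lt_min hr hm, fun s hs => ?_⟩
  rw [← he s ⟨hs.1, hs.2.trans_le (min_le_left _ _)⟩]
  exact h s ⟨hs.1, hs.2.trans_le (min_le_right _ _)⟩

lemma abB_congr {g g' : ℝ → ℝ} {c p l : ℝ} (hl : l < p)
    (he : ∀ x ∈ Ioo l p, g x = g' x) : AbB g c p ↔ AbB g' c p :=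
  ⟨fun h => h.congr hl he, fun h => h.congr hl fun x hx => (he x hx).symm⟩

lemma abA_congr {g g' : ℝ → ℝ} {c q r : ℝ} (hr : q < r)
    (he : ∀ x ∈ Ioo q r, g x = g' x) : AbA g c q ↔ AbA g' c q :=
  ⟨fun h => h.congr hr he, fun h => h.congr hr fun x hx => (he x hx).symm⟩

/-- integer translation -/
lemma per_int {g : ℝ → ℝ} (hp : Function.Periodic g 1) (k : ℤ) (x : ℝ) : g (x + k) = g x := by
  simpa using hp.int_mul k x

lemma IsComp.shift {g : ℝ → ℝ} {c p q : ℝ} (hp : Function.Periodic g 1) (h : IsComp g c p q)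
    (k : ℤ) : IsComp g c (p + k) (q + k) := by
  refine ⟨by linarith [h.le], fun x hx => ?_, fun l hl => ?_, fun r hr => ?_⟩
  · have := per_int hp k (x - k)
    rw [sub_add_cancel] at this
    rw [this]
    exact h.zero _ ⟨by linarith [hx.1], by linarith [hx.2]⟩
  · obtain ⟨x, hx, hg⟩ := h.left (l - k) (by linarith)
    exact ⟨x + k, ⟨by linarith [hx.1], by linarith [hx.2]⟩, by rwa [per_int hp]⟩
  · obtain ⟨x, hx, hg⟩ := h.right (r - k) (by linarith)
    exact ⟨x + k, ⟨by linarith [hx.1], by linarith [hx.2]⟩, by rwa [per_int hp]⟩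

lemma AbB.shift {g : ℝ → ℝ} {c p : ℝ} (hp : Function.Periodic g 1) (h : AbB g c p)
    (k : ℤ) : AbB g c (p + k) := by
  obtain ⟨l, hl, h⟩ := h
  refine ⟨l + k, by linarith, fun s hs => ?_⟩
  have := per_int hp k (s - k)
  rw [sub_add_cancel] at this
  rw [this]
  exact h _ ⟨by linarith [hs.1], by linarith [hs.2]⟩

lemma AbA.shift {g : ℝ → ℝ} {c p : ℝ} (hp : Function.Periodic g 1) (h : AbA g c p)
    (k : ℤ) : AbA g c (p + k) := by
  obtain ⟨l, hl, h⟩ := h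
  refine ⟨l + k, by linarith, fun s hs => ?_⟩
  have := per_int hp k (s - k)
  rw [sub_add_cancel] at this
  rw [this]
  exact h _ ⟨by linarith [hs.1], by linarith [hs.2]⟩

lemma abB_shift {g : ℝ → ℝ} {c p : ℝ} (hp : Function.Periodic g 1) (k : ℤ) :
    AbB g c (p + k) ↔ AbB g c p := by
  refine ⟨fun h => ?_, fun h => h.shift hp k⟩
  have := h.shift hp (-k)
  simpa using this

lemma abA_shift {g : ℝ → ℝ} {c p : ℝ} (hp : Function.Periodic g 1) (k : ℤ) :
    AbA g c (p + k) ↔ AbA g c p := by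
  refine ⟨fun h => ?_, fun h => h.shift hp k⟩
  have := h.shift hp (-k)
  simpa using this

lemma IsComp.ge_of_zero {g : ℝ → ℝ} {c p q l r : ℝ} (h : IsComp g c p q)
    (hz : ∀ x ∈ Icc l r, g x = c) (hr : p ≤ r) : p ≤ l := by
  by_contra! hl
  obtain ⟨x, hx, hg⟩ := h.left l hl
  exact hg (hz x ⟨hx.1.le, hx.2.le.trans hr⟩)

lemma IsComp.le_of_zero {g : ℝ → ℝ} {c p q l r : ℝ} (h : IsComp g c p q)
    (hz : ∀ x ∈ Icc l r, g x = c) (hl : l ≤ q) : r ≤ q := by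
  by_contra! hr
  obtain ⟨x, hx, hg⟩ := h.right r hr
  exact hg (hz x ⟨hl.trans hx.1.le, hx.2.le⟩)

lemma IsComp.eq_of_meet {g : ℝ → ℝ} {c p q p' q' : ℝ} (h : IsComp g c p q)
    (h' : IsComp g c p' q') (h1 : p ≤ q') (h2 : p' ≤ q) : p = p' ∧ q = q' :=
  ⟨le_antisymm (h.ge_of_zero h'.zero h1) (h'.ge_of_zero h.zero h2),
   le_antisymm (h'.le_of_zero h.zero h1) (h.le_of_zero h'.zero h2)⟩

lemma exists_comp {g : ℝ → ℝ} {c : ℝ} (hg : Continuous g) (hp : Function.Periodic g 1)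
    (hne : ∃ y, g y ≠ c) {t : ℝ} (ht : g t = c) :
    ∃ p q, IsComp g c p q ∧ t ∈ Icc p q ∧ connectedComponentIn {t | g t = c} t = Icc p q := by
  set Z : Set ℝ := {t | g t = c} with hZ
  set S := connectedComponentIn Z t with hS
  have htZ : t ∈ Z := ht
  have htS : t ∈ S := mem_connectedComponentIn htZ
  have hcl : IsClosed Z := isClosed_eq hg continuous_const
  have hSZ : S ⊆ Z := connectedComponentIn_subset _ _
  have hpre : IsPreconnected S := isPreconnected_connectedComponentIn
  have hSc : IsClosed S := by
    apply isClosed_of_closure_subset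
    exact hpre.closure.subset_connectedComponentIn (subset_closure htS)
      (closure_minimal hSZ hcl)
  obtain ⟨y, hy⟩ := hne
  have hyn : ∀ n : ℤ, y + n ∉ S := fun n hn => hy (by
    have := hSZ hn
    rwa [hZ, mem_ofPred_eq, per_int hp] at this)
  have hoc := hpre.ordConnected
  have hfl := Int.floor_le (t - y)
  have hfu := Int.lt_floor_add_one (t - y)
  have hbb : BddBelow S := ⟨y + (⌊t - y⌋ : ℤ), fun x hx => by
    by_contra! hlt
    exact hyn _ (hoc.out hx htS ⟨hlt.le, by linarith⟩)⟩
  have hba : BddAbove S := ⟨y + ((⌊t - y⌋ + 1 : ℤ) : ℝ), fun x hx => by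
    by_contra! hlt
    exact hyn _ (hoc.out htS hx ⟨by push_cast; linarith, hlt.le⟩)⟩
  have hconn : IsConnected S := ⟨⟨t, htS⟩, hpre⟩
  have heq : S = Icc (sInf S) (sSup S) :=
    eq_Icc_csInf_csSup_of_connected_bdd_closed hconn hbb hba hSc
  generalize sInf S = p at heq
  generalize sSup S = q at heq
  have htI : t ∈ Icc p q := heq ▸ htS
  refine ⟨p, q, ⟨htI.1.trans htI.2, fun x hx => hSZ (heq ▸ hx), ?_, ?_⟩, htI, heq⟩
  · intro l hl
    by_contra! hcon
    have hsub : Icc ((l + p) / 2) q ⊆ S := by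
      apply isPreconnected_Icc.subset_connectedComponentIn ⟨by linarith [htI.1], htI.2⟩
      intro x hx
      by_cases hxp : x < p
      · exact hcon x ⟨by linarith [hx.1], hxp⟩
      · exact hSZ (heq ▸ ⟨not_lt.1 hxp, hx.2⟩)
    have := hsub (left_mem_Icc.2 (by linarith [htI.1, htI.2]))
    rw [heq] at this
    linarith [this.1]
  · intro r hr
    by_contra! hcon
    have hsub : Icc p ((q + r) / 2) ⊆ S := by
      apply isPreconnected_Icc.subset_connectedComponentIn ⟨htI.1, by linarith [htI.2]⟩
      intro x hx
      by_cases hxp : q < x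
      · exact hcon x ⟨hxp, by linarith [hx.2]⟩
      · exact hSZ (heq ▸ ⟨hx.1, not_lt.1 hxp⟩)
    have := hsub (right_mem_Icc.2 (by linarith [htI.1, htI.2]))
    rw [heq] at this
    linarith [this.2]

lemma mem_circComps {g : ℝ → ℝ} {c : ℝ} (hg : Continuous g) (hp : Function.Periodic g 1)
    (hne : ∃ y, g y ≠ c) {S : Set ℝ} :
    S ∈ circComps {t | g t = c} ↔ ∃ p q, IsComp g c p q ∧ p ∈ Ico (0 : ℝ) 1 ∧ S = Icc p q := by
  constructor
  · rintro ⟨t, ht, rfl, hS⟩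
    obtain ⟨p, q, h, -, he⟩ := exists_comp hg hp hne ht
    rw [he, csInf_Icc h.le] at hS
    exact ⟨p, q, h, hS, he⟩
  · rintro ⟨p, q, h, hI, rfl⟩
    have hpz := h.zero p ⟨le_rfl, h.le⟩
    obtain ⟨p', q', h', ht, he⟩ := exists_comp hg hp hne hpz
    obtain ⟨rfl, rfl⟩ := h.eq_of_meet h' ht.2 (ht.1.trans h.le)
    exact ⟨p, hpz, he.symm, by rwa [csInf_Icc h.le]⟩

/-- representatives -/
lemma exists_rep {g : ℝ → ℝ} {c : ℝ} (hg : Continuous g) (hp : Function.Periodic g 1)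
    (hne : ∃ y, g y ≠ c) {p q : ℝ} (h : IsComp g c p q) :
    ∃ k : ℤ, Icc (p + k) (q + k) ∈ circComps {t | g t = c} := by
  refine ⟨-⌊p⌋, (mem_circComps hg hp hne).2 ⟨_, _, h.shift hp _, ?_, rfl⟩⟩
  have := Int.floor_le p
  have := Int.lt_floor_add_one p
  push_cast
  constructor <;> linarith

lemma isGlancing_shift {g : ℝ → ℝ} {c p q : ℝ} (hp : Function.Periodic g 1) (h : p ≤ q) (k : ℤ) :
    IsGlancing g c (Icc (p + k) (q + k)) ↔ (AbB g c p ↔ AbA g c q) := by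
  rw [isGlancing_Icc (by linarith), abB_shift hp, abA_shift hp]

lemma Icc_inj {p q p' q' : ℝ} (h : p ≤ q) (h' : p' ≤ q') (he : Icc p q = Icc p' q') :
    p = p' ∧ q = q' := by
  constructor
  · rw [← csInf_Icc h, he, csInf_Icc h']
  · rw [← csSup_Icc h, he, csSup_Icc h']

lemma const_sign {g : ℝ → ℝ} {c x y : ℝ} (hg : Continuous g) 
    (h : ∀ z ∈ uIcc x y, g z ≠ c) : c < g x ↔ c < g y := by
  have hx := h x left_mem_uIcc
  have hy := h y right_mem_uIcc
  by_contra hcon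
  have : c ∈ uIcc (g x) (g y) := by
    rw [mem_uIcc]
    by_cases h1 : c < g x <;> by_cases h2 : c < g y
    · tauto
    · right; exact ⟨not_lt.1 h2, h1.le⟩
    · left; exact ⟨not_lt.1 h1, h2.le⟩
    · tauto
  obtain ⟨z, hz, hzc⟩ := intermediate_value_uIcc (hg.continuousOn (s := uIcc x y)) this
  exact h z hz hzc

lemma abA_iff {g : ℝ → ℝ} {c q m : ℝ} (hg : Continuous g) (hm : q < m)
    (h : ∀ z ∈ Ioc q m, g z ≠ c) : AbA g c q ↔ c < g m := by
  have key : ∀ s ∈ Ioc q m, (c < g s ↔ c < g m) := fun s hs => const_sign hg fun z hz => by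
    rw [uIcc_of_le hs.2] at hz
    exact h z ⟨hs.1.trans_le hz.1, hz.2⟩
  constructor
  · rintro ⟨r, hr, h'⟩
    obtain ⟨s, hs1, hs2⟩ := exists_between (lt_min hr hm)
    exact (key s ⟨hs1, hs2.le.trans (min_le_right _ _)⟩).1
      (h' s ⟨hs1, hs2.trans_le (min_le_left _ _)⟩)
  · intro hc
    exact ⟨m, hm, fun s hs => (key s ⟨hs.1, hs.2.le⟩).2 hc⟩

lemma abB_iff {g : ℝ → ℝ} {c p m : ℝ} (hg : Continuous g) (hm : m < p)
    (h : ∀ z ∈ Ico m p, g z ≠ c) : AbB g c p ↔ c < g m := by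
  have key : ∀ s ∈ Ico m p, (c < g s ↔ c < g m) := fun s hs => const_sign hg fun z hz => by
    rw [uIcc_of_ge hs.1] at hz
    exact h z ⟨hz.1, hz.2.trans_lt hs.2⟩
  constructor
  · rintro ⟨r, hr, h'⟩
    obtain ⟨s, hs1, hs2⟩ := exists_between (max_lt hr hm)
    exact (key s ⟨(le_max_right _ _).trans hs1.le, hs2⟩).1
      (h' s ⟨(le_max_left _ _).trans_lt hs1, hs2⟩)
  · intro hc
    exact ⟨m, hm, fun s hs => (key s ⟨hs.1.le, hs.2⟩).2 hc⟩

/-! ### Cardinal bookkeeping -/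

lemma card_aux {α : Type} (A A' : Set α) (G G' B : α → Prop)
    (h1 : ∀ S, ¬ B S → (S ∈ A → S ∈ A'))
    (h2 : ∀ S ∈ A, ¬ B S → G S → G' S)
    (hu : ∀ S ∈ A, ∀ T ∈ A, B S → B T → S = T)
    (h3 : ∀ S ∈ A, B S → ∃ T ∈ A', B T)
    (h4 : ∀ S ∈ A, B S → G S → (∃ T ∈ A', ∃ U ∈ A', B T ∧ B U ∧ T ≠ U) ∨ ∃ T ∈ A', B T ∧ G' T) :
    Cardinal.mk A + Cardinal.mk ({S ∈ A | G S} : Set α) ≤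
      Cardinal.mk A' + Cardinal.mk ({S ∈ A' | G' S} : Set α) := by
  set C : Set α := {S ∈ A | ¬ B S} with hC
  set D : Set α := {S ∈ A | ¬ B S ∧ G S} with hD
  have hCA' : C ⊆ A' := fun S hS => h1 S hS.2 hS.1
  have hDA' : D ⊆ {S ∈ A' | G' S} := fun S hS => ⟨h1 S hS.2.1 hS.1, h2 S hS.1 hS.2.1 hS.2.2⟩
  have hCB : ∀ T, B T → T ∉ C := fun T hT hc => hc.2 hT
  have hDB : ∀ T, B T → T ∉ D := fun T hT hc => hc.2.1 hT
  by_cases hb : ∃ S ∈ A, B S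
  · obtain ⟨S, hSA, hSB⟩ := hb
    have hA : Cardinal.mk A ≤ Cardinal.mk C + 1 := by
      rw [← Cardinal.mk_insert (hCB S hSB)]
      apply Cardinal.mk_le_mk_of_subset
      intro T hT
      by_cases hTB : B T
      · exact Or.inl (hu T hT S hSA hTB hSB)
      · exact Or.inr ⟨hT, hTB⟩
    by_cases hSG : G S
    · have hG : Cardinal.mk ({S ∈ A | G S} : Set α) ≤ Cardinal.mk D + 1 := by
        rw [← Cardinal.mk_insert (hDB S hSB)]
        apply Cardinal.mk_le_mk_of_subset
        intro T hT
        by_cases hTB : B T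
        · exact Or.inl (hu T hT.1 S hSA hTB hSB)
        · exact Or.inr ⟨hT.1, hTB, hT.2⟩
      rcases h4 S hSA hSB hSG with ⟨T, hT, U, hU, hTB, hUB, hne⟩ | ⟨T, hT, hTB, hTG⟩
      · have hA' : Cardinal.mk C + 1 + 1 ≤ Cardinal.mk A' := by
          rw [← Cardinal.mk_insert (hCB U hUB), ← Cardinal.mk_insert (a := T)]
          · apply Cardinal.mk_le_mk_of_subset
            exact insert_subset hT (insert_subset hU hCA')
          · rintro (h | h)
            · exact hne h
            · exact hCB T hTB h
        calc _ ≤ (Cardinal.mk C + 1) + (Cardinal.mk D + 1) := add_le_add hA hG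
          _ = (Cardinal.mk C + 1 + 1) + Cardinal.mk D := by ring
          _ ≤ _ := add_le_add hA' (Cardinal.mk_le_mk_of_subset hDA')
      · refine (add_le_add hA hG).trans (add_le_add ?_ ?_)
        · rw [← Cardinal.mk_insert (hCB T hTB)]
          exact Cardinal.mk_le_mk_of_subset (insert_subset hT hCA')
        · rw [← Cardinal.mk_insert (hDB T hTB)]
          exact Cardinal.mk_le_mk_of_subset (insert_subset ⟨hT, hTG⟩ hDA')
    · obtain ⟨T, hT, hTB⟩ := h3 S hSA hSB
      refine add_le_add (hA.trans ?_) (Cardinal.mk_le_mk_of_subset fun U hU => ?_)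
      · rw [← Cardinal.mk_insert (hCB T hTB)]
        exact Cardinal.mk_le_mk_of_subset (insert_subset hT hCA')
      · apply hDA'
        refine ⟨hU.1, fun hUB => hSG ?_, hU.2⟩
        rw [hu S hSA U hU.1 hSB hUB]
        exact hU.2
  · push Not at hb
    refine add_le_add (Cardinal.mk_le_mk_of_subset fun T hT => h1 T (hb T hT) hT)
      (Cardinal.mk_le_mk_of_subset fun T hT => hDA' ⟨hT.1, hb T hT.1, hT.2⟩)

lemma card_two {α : Type} (A' : Set α) (G' : α → Prop)
    (h4 : (∃ T ∈ A', ∃ U ∈ A', T ≠ U) ∨ ∃ T ∈ A', G' T) :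
    2 ≤ Cardinal.mk A' + Cardinal.mk ({S ∈ A' | G' S} : Set α) := by
  rcases h4 with ⟨T, hT, U, hU, hne⟩ | ⟨T, hT, hG⟩
  · refine le_trans ?_ (self_le_add_right _ _)
    rw [Cardinal.two_le_iff]
    exact ⟨⟨T, hT⟩, ⟨U, hU⟩, fun h => hne (congrArg Subtype.val h)⟩
  · rw [← one_add_one_eq_two]
    refine add_le_add ?_ ?_
    · rw [Cardinal.one_le_iff_ne_zero, Cardinal.mk_ne_zero_iff]; exact ⟨⟨T, hT⟩⟩
    · rw [Cardinal.one_le_iff_ne_zero, Cardinal.mk_ne_zero_iff]; exact ⟨⟨T, hT, hG⟩⟩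

/-! ### The geometric part -/

/-- `S` meets a translate of `[a,b]` -/
def Bad (a b : ℝ) (S : Set ℝ) : Prop := ∃ k : ℤ, (S ∩ Icc (a + k) (b + k)).Nonempty

lemma good_transfer {g g' : ℝ → ℝ} {a b c p q : ℝ} 
    (hE : ∀ k : ℤ, ∀ t ∈ Icc (b + k) (a + 1 + k), g t = g' t)
    (h : IsComp g c p q) (hb : ¬ Bad a b (Icc p q)) (hab : a < b) :
    IsComp g' c p q ∧ (AbB g c p ↔ AbB g' c p) ∧ (AbA g c q ↔ AbA g' c q) := by
  obtain ⟨k, hk⟩ : ∃ k : ℤ, k = ⌊p - a⌋ := ⟨_, rfl⟩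
  have hfl := Int.floor_le (p - a)
  have hfu := Int.lt_floor_add_one (p - a)
  rw [← hk] at hfl hfu
  have hp1 : b + k < p := by
    by_contra! hcon
    exact hb ⟨k, p, ⟨le_rfl, h.le⟩, by linarith, hcon⟩
  have hq1 : q < a + 1 + k := by
    by_contra! hcon
    exact hb ⟨k + 1, a + 1 + k, ⟨by linarith, hcon⟩, by push_cast; linarith, 
      by push_cast; linarith⟩
  have hpq := h.le
  have hl : ∀ x ∈ Ioo (b + k) p, g x = g' x := fun x hx =>
    hE k x ⟨hx.1.le, by linarith [hx.2]⟩
  have hr : ∀ x ∈ Ioo q (a + 1 + k), g x = g' x := fun x hx =>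
    hE k x ⟨by linarith [hx.1], hx.2.le⟩
  refine ⟨⟨hpq, fun x hx => ?_, h.left.congr hp1 hl, h.right.congr hq1 hr⟩, 
    abB_congr hp1 hl, abA_congr hq1 hr⟩
  rw [← hE k x ⟨by linarith [hx.1], by linarith [hx.2]⟩]
  exact h.zero x hx

/-- comparison of left ends -/
lemma left_cmp {g g' : ℝ → ℝ} {c p q p' q' l a y : ℝ} (hE : ∀ t ∈ Icc l a, g t = g' t)
    (h : IsComp g c p q) (h' : IsComp g' c p' q') (ha : a ∈ Icc p q) (ha' : a ∈ Icc p' q')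
    (hy : y ∈ Icc l a) (hgy : g y ≠ c) : p = p' ∧ l < p ∧ (AbB g c p ↔ AbB g' c p') := by
  have h1 : l < p := by
    by_contra! hcon
    exact hgy (h.zero y ⟨hcon.trans hy.1, hy.2.trans ha.2⟩)
  have h2 : l < p' := by
    by_contra! hcon
    exact hgy ((hE y hy).trans (h'.zero y ⟨hcon.trans hy.1, hy.2.trans ha'.2⟩))
  have e : p = p' := by
    apply le_antisymm
    · refine h.ge_of_zero (r := a) (fun x hx => ?_) ha.1
      rw [hE x ⟨by linarith [hx.1], hx.2⟩]
      exact h'.zero x ⟨hx.1, hx.2.trans ha'.2⟩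
    · refine h'.ge_of_zero (r := a) (fun x hx => ?_) ha'.1
      rw [← hE x ⟨by linarith [hx.1], hx.2⟩]
      exact h.zero x ⟨hx.1, hx.2.trans ha.2⟩
  subst e
  exact ⟨rfl, h1, abB_congr h1 fun x hx => hE x ⟨hx.1.le, hx.2.le.trans ha.1⟩⟩

/-- comparison of right ends -/
lemma right_cmp {g g' : ℝ → ℝ} {c p q p' q' r b y : ℝ} (hE : ∀ t ∈ Icc b r, g t = g' t)
    (h : IsComp g c p q) (h' : IsComp g' c p' q') (hb : b ∈ Icc p q) (hb' : b ∈ Icc p' q')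
    (hy : y ∈ Icc b r) (hgy : g y ≠ c) : q = q' ∧ q < r ∧ (AbA g c q ↔ AbA g' c q') := by
  have h1 : q < r := by
    by_contra! hcon
    exact hgy (h.zero y ⟨hb.1.trans hy.1, hy.2.trans hcon⟩)
  have h2 : q' < r := by
    by_contra! hcon
    exact hgy ((hE y hy).trans (h'.zero y ⟨hb'.1.trans hy.1, hy.2.trans hcon⟩))
  have e : q = q' := by
    apply le_antisymm
    · refine h'.le_of_zero (l := b) (fun x hx => ?_) hb'.2
      rw [← hE x ⟨hx.1, by linarith [hx.2]⟩]
      exact h.zero x ⟨hb.1.trans hx.1, hx.2⟩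
    · refine h.le_of_zero (l := b) (fun x hx => ?_) hb.2
      rw [hE x ⟨hx.1, by linarith [hx.2]⟩]
      exact h'.zero x ⟨hb'.1.trans hx.1, hx.2⟩
  subst e
  exact ⟨rfl, h1, abA_congr h1 fun x hx => hE x ⟨hb.2.trans hx.1.le, hx.2.le⟩⟩

/-- A full period of zeros gives a constant function. -/
lemma all_zero {g : ℝ → ℝ} {c x : ℝ} (hp : Function.Periodic g 1)
    (h : ∀ t ∈ Icc x (x + 1), g t = c) (t : ℝ) : g t = c := by
  have hfl := Int.floor_le (t - x)
  have hfu := Int.lt_floor_add_one (t - x)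
  have := per_int hp (-⌊t - x⌋) t
  rw [← this]
  apply h
  push_cast
  constructor <;> linarith

lemma lin_zero {c a b A B x y z h1 h2 h3 : ℝ} (hab : a < b)
    (hx : (b - a) * (h1 - c) = (b - x) * (A - c) + (x - a) * (B - c))
    (hy : (b - a) * (h2 - c) = (b - y) * (A - c) + (y - a) * (B - c))
    (hz : (b - a) * (h3 - c) = (b - z) * (A - c) + (z - a) * (B - c))
    (e1 : h1 = c) (e2 : h2 = c) (hxz : x ≤ z) (hzy : z ≤ y) : h3 = c := by
  subst e1
  rw [e2] at hy
  have hd : (x - y) * (B - A) = 0 := by linarith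
  rcases mul_eq_zero.1 hd with h | h
  · have : z = x := by linarith
    subst this
    have : (b - a) * (h3 - h1) = 0 := by linarith
    rcases mul_eq_zero.1 this with h | h <;> linarith
  · have hB : B = A := by linarith
    subst hB
    have h0 : (b - a) * (B - h1) = 0 := by linarith
    have : (b - a) * (h3 - h1) = 0 := by rw [hz]; linarith
    rcases mul_eq_zero.1 this with h | h <;> linarith

lemma exists_zero {g : ℝ → ℝ} {c a b x : ℝ} (hg : Continuous g) (hab : a < b) (hx : x ∈ Icc a b)
    (e : 0 = (b - x) * (g a - c) + (x - a) * (g b - c)) : ∃ z ∈ Icc a b, g z = c := by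
  by_contra! hcon
  have hs := const_sign (x := a) (y := b) hg (by rwa [uIcc_of_le hab.le])
  have ha := hcon a ⟨le_rfl, hab.le⟩
  have hb := hcon b ⟨hab.le, le_rfl⟩
  have x1 := hx.1
  have x2 := hx.2
  by_cases h : c < g a
  · have h' := hs.1 h
    rcases lt_or_ge a x with hax | hax
    · nlinarith [mul_pos (sub_pos.2 hax) (sub_pos.2 h'), mul_nonneg (sub_nonneg.2 x2) (sub_pos.2 h).le]
    · have : x = a := le_antisymm hax x1
      subst this
      nlinarith [mul_pos (sub_pos.2 hab) (sub_pos.2 h)]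
  · have h' : ¬ c < g b := fun h' => h (hs.2 h')
    have h1 : g a < c := lt_of_le_of_ne (not_lt.1 h) ha
    have h2 : g b < c := lt_of_le_of_ne (not_lt.1 h') hb
    rcases lt_or_ge a x with hax | hax
    · nlinarith [mul_pos (sub_pos.2 hax) (sub_pos.2 h2), mul_nonneg (sub_nonneg.2 x2) (sub_pos.2 h1).le]
    · have : x = a := le_antisymm hax x1
      subst this
      nlinarith [mul_pos (sub_pos.2 hab) (sub_pos.2 h1)]

lemma core {g h : ℝ → ℝ} {c a b : ℝ} (hg : Continuous g) (hgp : Function.Periodic g 1)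
    (hh : Continuous h) (hhp : Function.Periodic h 1) (hab : a < b) (hba : b ≤ a + 1)
    (hgne : ∃ y, g y ≠ c) (hhne : ∃ y, h y ≠ c)
    (hlin : ∀ t ∈ Icc a b, (b - a) * (h t - c) = (b - t) * (g a - c) + (t - a) * (g b - c))
    (hE : ∀ k : ℤ, ∀ t ∈ Icc (b + k) (a + 1 + k), h t = g t)
    {ps qs x : ℝ} (hS : IsComp h c ps qs) (hxS : x ∈ Icc ps qs) (hx : x ∈ Icc a b)
    (hgl : AbB h c ps ↔ AbA h c qs)
    (huniq : ∀ p q p' q' z z', IsComp g c p q → IsComp g c p' q' → z ∈ Icc p q → z ∈ Icc a b →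
      z' ∈ Icc p' q' → z' ∈ Icc a b → ∃ k : ℤ, p' = p + k ∧ q' = q + k) :
    ∃ p q z, IsComp g c p q ∧ z ∈ Icc p q ∧ z ∈ Icc a b ∧ (AbB g c p ↔ AbA g c q) := by
  have haI : a ∈ Icc a b := ⟨le_rfl, hab.le⟩
  have hbI : b ∈ Icc a b := ⟨hab.le, le_rfl⟩
  have hba0 : 0 < b - a := by linarith
  have hha : h a = g a := by
    have := hlin a haI
    have h2 : (b - a) * (h a - g a) = 0 := by linarith
    rcases mul_eq_zero.1 h2 with h | h <;> linarith
  have hhb : h b = g b := by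
    have := hlin b hbI
    have h2 : (b - a) * (h b - g b) = 0 := by linarith
    rcases mul_eq_zero.1 h2 with h | h <;> linarith
  have hER : ∀ t ∈ Icc b (a + 1), h t = g t := fun t ht => hE 0 t (by simpa using ht)
  have hEL : ∀ t ∈ Icc (b - 1) a, h t = g t := fun t ht => hE (-1) t
    ⟨by push_cast; linarith [ht.1], by push_cast; linarith [ht.2]⟩
  have hxz := hS.zero x hxS
  have hxl := hlin x hx
  rw [hxz, sub_self, mul_zero] at hxl
  have hb1 : g (b - 1) = g b := by
    have := hgp (b - 1); rw [sub_add_cancel] at this; exact this.symm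
  have hxzero : ∀ z ∈ Icc a b, h z = c → g a ≠ c ∨ g b ≠ c → z = x := by
    intro z hz hzc hor
    have e2 := hlin z hz
    rw [hzc, sub_self, mul_zero] at e2
    have hd : (x - z) * (g b - g a) = 0 := by linarith
    rcases mul_eq_zero.1 hd with h | h
    · linarith
    · have hB : g b = g a := by linarith
      rw [hB] at hxl hor
      have : (b - a) * (g a - c) = 0 := by linarith
      rcases mul_eq_zero.1 this with h | h
      · linarith
      · exact absurd (by linarith : g a = c) (by tauto)
  by_cases ha : g a = c
  · by_cases hb : g b = c
    · -- both ends are zeros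
      have hall : ∀ t ∈ Icc a b, h t = c := fun t ht =>
        lin_zero hab (hlin a haI) (hlin b hbI) (hlin t ht) (hha.trans ha) (hhb.trans hb) ht.1 ht.2
      have hpsa : ps ≤ a := hS.ge_of_zero hall (hxS.1.trans hx.2)
      have hqsb : b ≤ qs := hS.le_of_zero hall (hx.1.trans hxS.2)
      obtain ⟨y, hy, hyc⟩ : ∃ y ∈ Icc (b - 1) a, h y ≠ c := by
        by_contra! hcon
        obtain ⟨w, hw⟩ := hhne
        refine hw (all_zero (x := b - 1) hhp (fun t ht => ?_) w)
        rcases le_total t a with hta | hta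
        · exact hcon t ⟨ht.1, hta⟩
        · exact hall t ⟨hta, by linarith [ht.2]⟩
      obtain ⟨p, q, hC, haC, -⟩ := exists_comp hg hgp hgne ha
      obtain ⟨p', q', hC', hbC', -⟩ := exists_comp hg hgp hgne hb
      obtain ⟨e1, l1, i1⟩ := left_cmp hEL hS hC ⟨hpsa, by linarith⟩ haC hy hyc
      obtain ⟨e2, l2, i2⟩ := right_cmp (y := y + 1) hER hS hC' ⟨by linarith, hqsb⟩ hbC'
        ⟨by linarith [hy.1], by linarith [hy.2]⟩ (by rwa [hhp])
      obtain ⟨k, hk1, hk2⟩ := huniq p q p' q' a b hC hC' haC haI hbC' hbI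
      have hk : k = 0 := by
        rcases lt_trichotomy k 0 with hk | hk | hk
        · exfalso
          have hk' : (k : ℝ) ≤ -1 := by exact_mod_cast (by omega : k ≤ -1)
          obtain ⟨w, hw⟩ := hgne
          refine hw (all_zero (x := a) hgp (fun t ht => hC.zero t ⟨?_, ?_⟩) w)
          · exact haC.1.trans ht.1
          · linarith [ht.2, hbC'.2]
        · exact hk
        · exfalso
          have hk' : (1 : ℝ) ≤ k := by exact_mod_cast (by omega : 1 ≤ k)
          linarith [hbC'.1]
      subst hk
      simp only [Int.cast_zero, add_zero] at hk1 hk2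
      subst hk1 hk2
      exact ⟨_, _, a, hC, haC, haI, by rw [← i1, ← i2]; exact hgl⟩
    · -- only `a`
      have hxa : x = a := (hxzero a haI (hha.trans ha) (Or.inr hb)).symm
      subst hxa
      obtain ⟨p, q, hC, haC, -⟩ := exists_comp hg hgp hgne ha
      have hb1x : b - 1 ≤ x := by linarith
      have hneb : h (b - 1) ≠ c := by
        rw [hEL _ ⟨le_rfl, hb1x⟩, hb1]; exact hb
      obtain ⟨e1, l1, i1⟩ := left_cmp hEL hS hC hxS haC ⟨le_rfl, hb1x⟩ hneb
      have hqsb : qs < b := by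
        by_contra! hcon
        exact hb (by rw [← hhb]; exact hS.zero b ⟨by linarith [hxS.1], hcon⟩)
      have hqb : q < b := by
        by_contra! hcon
        exact hb (hC.zero b ⟨by linarith [haC.1], hcon⟩)
      have j1 : AbA h c qs ↔ c < h b := abA_iff hh hqsb fun z hz hzc => by
        have := hxzero z ⟨by linarith [hz.1, hxS.2], hz.2⟩ hzc (Or.inr hb)
        linarith [hz.1, hxS.2]
      have j2 : AbA g c q ↔ c < g b := abA_iff hg hqb fun z hz hzc => by
        obtain ⟨p', q', hC', hzC', -⟩ := exists_comp hg hgp hgne hzc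
        obtain ⟨k, hk1, hk2⟩ := huniq p q p' q' x z hC hC' haC haI hzC'
          ⟨by linarith [hz.1, haC.2], hz.2⟩
        rcases lt_or_ge k 1 with hk | hk
        · have hk' : (k : ℝ) ≤ 0 := by exact_mod_cast (by omega : k ≤ 0)
          linarith [hz.1, hzC'.2]
        · have hk' : (1 : ℝ) ≤ k := by exact_mod_cast hk
          linarith [hz.2, hzC'.1]
      exact ⟨p, q, x, hC, haC, haI, by rw [← i1, j2, ← hhb, ← j1]; exact hgl⟩
  · by_cases hb : g b = c
    · -- only `b`
      have hxb : x = b := (hxzero b hbI (hhb.trans hb) (Or.inl ha)).symm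
      subst hxb
      obtain ⟨p, q, hC, hbC, -⟩ := exists_comp hg hgp hgne hb
      have hnea : h (a + 1) ≠ c := by
        rw [hhp, hha]; exact ha
      obtain ⟨e1, l1, i1⟩ := right_cmp hER hS hC hxS hbC ⟨hba, le_rfl⟩ hnea
      have hpsa : a < ps := by
        by_contra! hcon
        exact ha (by rw [← hha]; exact hS.zero a ⟨hcon, by linarith [hxS.2]⟩)
      have hpa : a < p := by
        by_contra! hcon
        exact ha (hC.zero a ⟨hcon, by linarith [hbC.2]⟩)
      have j1 : AbB h c ps ↔ c < h a := abB_iff hh hpsa fun z hz hzc => by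
        have := hxzero z ⟨hz.1, by linarith [hz.2, hxS.1]⟩ hzc (Or.inl ha)
        linarith [hz.2, hxS.1]
      have j2 : AbB g c p ↔ c < g a := abB_iff hg hpa fun z hz hzc => by
        obtain ⟨p', q', hC', hzC', -⟩ := exists_comp hg hgp hgne hzc
        obtain ⟨k, hk1, hk2⟩ := huniq p q p' q' x z hC hC' hbC hbI hzC'
          ⟨hz.1, by linarith [hz.2, hbC.1]⟩
        rcases lt_or_ge k 0 with hk | hk
        · have hk' : (k : ℝ) ≤ -1 := by exact_mod_cast (by omega : k ≤ -1)
          linarith [hz.1, hzC'.2]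
        · have hk' : (0 : ℝ) ≤ k := by exact_mod_cast hk
          linarith [hz.2, hzC'.1]
      exact ⟨p, q, x, hC, hbC, hbI, by rw [← i1, j2, ← hha, ← j1]; exact hgl⟩
    · -- transversal crossing: cannot be glancing
      exfalso
      have hpsa : a < ps := by
        by_contra! hcon
        exact ha (by rw [← hha]; exact hS.zero a ⟨hcon, by linarith [hxS.2, hx.1]⟩)
      have hqsb : qs < b := by
        by_contra! hcon
        exact hb (by rw [← hhb]; exact hS.zero b ⟨by linarith [hxS.1, hx.2], hcon⟩)
      have j1 : AbB h c ps ↔ c < h a := abB_iff hh hpsa fun z hz hzc => by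
        have := hxzero z ⟨hz.1, by linarith [hz.2, hxS.1, hx.2]⟩ hzc (Or.inl ha)
        linarith [hz.2, hxS.1]
      have j2 : AbA h c qs ↔ c < h b := abA_iff hh hqsb fun z hz hzc => by
        have := hxzero z ⟨by linarith [hz.1, hxS.2, hx.1], hz.2⟩ hzc (Or.inr hb)
        linarith [hz.1, hxS.2]
      rw [j1, j2, hha, hhb] at hgl
      have hax : 0 < x - a := by linarith [hxS.1]
      have hxb : 0 < b - x := by linarith [hxS.2]
      by_cases hc : c < g a
      · nlinarith [mul_pos hxb (sub_pos.2 hc), mul_pos hax (sub_pos.2 (hgl.1 hc))]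
      · have h1 : g a < c := lt_of_le_of_ne (not_lt.1 hc) ha
        have h2 : g b < c := lt_of_le_of_ne (not_lt.1 fun h' => hc (hgl.2 h')) hb
        nlinarith [mul_pos hxb (sub_pos.2 h1), mul_pos hax (sub_pos.2 h2)]

/-- Real-valued version, neither level set being everything. -/
lemma count_le {g h : ℝ → ℝ} {c a b : ℝ} (hg : Continuous g) (hgp : Function.Periodic g 1)
    (hh : Continuous h) (hhp : Function.Periodic h 1) (hab : a < b) (hba : b ≤ a + 1)
    (hgne : ∃ y, g y ≠ c) (hhne : ∃ y, h y ≠ c)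
    (hlin : ∀ t ∈ Icc a b, (b - a) * (h t - c) = (b - t) * (g a - c) + (t - a) * (g b - c))
    (hE : ∀ k : ℤ, ∀ t ∈ Icc (b + k) (a + 1 + k), h t = g t) :
    Cardinal.mk (circComps {t : ℝ | h t = c})
      + Cardinal.mk ({S ∈ circComps {t : ℝ | h t = c} | IsGlancing h c S} : Set (Set ℝ)) ≤
    Cardinal.mk (circComps {t : ℝ | g t = c})
      + Cardinal.mk ({S ∈ circComps {t : ℝ | g t = c} | IsGlancing g c S} : Set (Set ℝ)) := by
  -- a bad component may be moved so that it meets `[a,b]`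
  have hmove : ∀ f : ℝ → ℝ, Function.Periodic f 1 → ∀ p q, IsComp f c p q → Bad a b (Icc p q) →
      ∃ k : ℤ, ∃ z, IsComp f c (p + k) (q + k) ∧ z ∈ Icc (p + k) (q + k) ∧ z ∈ Icc a b := by
    rintro f hf p q hC ⟨k, z, hz, hz'⟩
    refine ⟨-k, z - k, hC.shift hf _, ⟨?_, ?_⟩, ⟨?_, ?_⟩⟩ <;> push_cast <;>
      linarith [hz.1, hz.2, hz'.1, hz'.2]
  have hrep : ∀ p q z, IsComp g c p q → z ∈ Icc p q → z ∈ Icc a b →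
      ∃ k : ℤ, Icc (p + k) (q + k) ∈ circComps {t | g t = c} ∧ Bad a b (Icc (p + k) (q + k)) := by
    intro p q z hC hz hz'
    obtain ⟨k, hk⟩ := exists_rep hg hgp hgne hC
    exact ⟨k, hk, k, z + k, ⟨by linarith [hz.1], by linarith [hz.2]⟩,
      ⟨by linarith [hz'.1], by linarith [hz'.2]⟩⟩
  apply card_aux _ _ _ _ (Bad a b)
  · intro S hB hS
    obtain ⟨p, q, hC, hI, rfl⟩ := (mem_circComps hh hhp hhne).1 hS
    exact (mem_circComps hg hgp hgne).2 ⟨p, q, (good_transfer hE hC hB hab).1, hI, rfl⟩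
  · intro S hS hB hG
    obtain ⟨p, q, hC, hI, rfl⟩ := (mem_circComps hh hhp hhne).1 hS
    rw [isGlancing_Icc hC.le] at hG ⊢
    obtain ⟨-, h1, h2⟩ := good_transfer hE hC hB hab
    rw [← h1, ← h2]
    exact hG
  · intro S hS T hT hBS hBT
    obtain ⟨p, q, hC, hI, rfl⟩ := (mem_circComps hh hhp hhne).1 hS
    obtain ⟨p', q', hC', hI', rfl⟩ := (mem_circComps hh hhp hhne).1 hT
    obtain ⟨k, z, hk, hz, hzI⟩ := hmove h hhp p q hC hBS
    obtain ⟨k', z', hk', hz', hzI'⟩ := hmove h hhp p' q' hC' hBT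
    have key : p + k = p' + k' ∧ q + k = q' + k' := by
      rcases le_total z z' with hzz | hzz
      · have hall : ∀ t ∈ Icc z z', h t = c := fun t ht =>
          lin_zero hab (hlin z hzI) (hlin z' hzI') (hlin t ⟨hzI.1.trans ht.1, ht.2.trans hzI'.2⟩)
            (hk.zero z hz) (hk'.zero z' hz') ht.1 ht.2
        have h1 := hk.le_of_zero hall hz.2
        exact hk.eq_of_meet hk' (by linarith [hz.1, hz'.2]) (by linarith [hz'.1])
      · have hall : ∀ t ∈ Icc z' z, h t = c := fun t ht =>
          lin_zero hab (hlin z' hzI') (hlin z hzI) (hlin t ⟨hzI'.1.trans ht.1, ht.2.trans hzI.2⟩)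
            (hk'.zero z' hz') (hk.zero z hz) ht.1 ht.2
        have h1 := hk'.le_of_zero hall hz'.2
        exact hk.eq_of_meet hk' (by linarith [hz.1]) (by linarith [hz'.1, hz.2])
    obtain ⟨k1, k2⟩ := key
    have l1 : (k : ℝ) < k' + 1 := by linarith [hI.1, hI'.2]
    have l2 : (k' : ℝ) < k + 1 := by linarith [hI.2, hI'.1]
    have : k = k' := by
      have l1' : k < k' + 1 := by exact_mod_cast l1
      have l2' : k' < k + 1 := by exact_mod_cast l2
      omega
    subst this
    rw [add_right_cancel k1, add_right_cancel k2]
  · intro S hS hB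
    obtain ⟨p, q, hC, hI, rfl⟩ := (mem_circComps hh hhp hhne).1 hS
    obtain ⟨k, x, hk, hx, hxI⟩ := hmove h hhp p q hC hB
    have hxl := hlin x hxI
    rw [hk.zero x hx, sub_self, mul_zero] at hxl
    obtain ⟨z, hzI, hz⟩ := exists_zero hg hab hxI hxl
    obtain ⟨p', q', hC', hzC, -⟩ := exists_comp hg hgp hgne hz
    obtain ⟨m, h1, h2⟩ := hrep p' q' z hC' hzC hzI
    exact ⟨_, h1, h2⟩
  · intro S hS hB hG
    obtain ⟨p, q, hC, hI, rfl⟩ := (mem_circComps hh hhp hhne).1 hS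
    obtain ⟨k, x, hk, hx, hxI⟩ := hmove h hhp p q hC hB
    rw [isGlancing_Icc hC.le, ← abB_shift hhp k, ← abA_shift hhp k] at hG
    by_cases htwo : ∃ T ∈ circComps {t | g t = c}, ∃ U ∈ circComps {t | g t = c},
        Bad a b T ∧ Bad a b U ∧ T ≠ U
    · exact Or.inl htwo
    right
    push Not at htwo
    obtain ⟨p', q', z, hC', hz, hzI, hgl⟩ := core hg hgp hh hhp hab hba hgne hhne hlin hE hk hx hxI hG
      (by
        intro p q p' q' z z' hC hC' hz hzI hz' hzI'
        obtain ⟨m, h1, h2⟩ := hrep p q z hC hz hzI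
        obtain ⟨m', h1', h2'⟩ := hrep p' q' z' hC' hz' hzI'
        obtain ⟨e1, e2⟩ := Icc_inj (by linarith [hC.le]) (by linarith [hC'.le])
          (htwo _ h1 _ h1' h2 h2')
        refine ⟨m - m', ?_, ?_⟩ <;> push_cast <;> linarith)
    obtain ⟨m, h1, h2⟩ := hrep p' q' z hC' hz hzI
    exact ⟨_, h1, h2, (isGlancing_shift hgp hC'.le m).2 hgl⟩

/-- A level set which is neither empty nor everything is cut at least twice. -/
lemma two_le_count {g : ℝ → ℝ} {c t : ℝ} (hg : Continuous g) (hgp : Function.Periodic g 1)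
    (hgne : ∃ y, g y ≠ c) (ht : g t = c) :
    2 ≤ Cardinal.mk (circComps {t : ℝ | g t = c})
      + Cardinal.mk ({S ∈ circComps {t : ℝ | g t = c} | IsGlancing g c S} : Set (Set ℝ)) := by
  apply card_two
  by_cases htwo : ∃ T ∈ circComps {t | g t = c}, ∃ U ∈ circComps {t | g t = c}, T ≠ U
  · exact Or.inl htwo
  right
  push Not at htwo
  obtain ⟨p, q, hC, -, -⟩ := exists_comp hg hgp hgne ht
  obtain ⟨k, hk⟩ := exists_rep hg hgp hgne hC
  refine ⟨_, hk, (isGlancing_shift hgp hC.le k).2 ?_⟩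
  have hpq := hC.le
  have hqp : q < p + 1 := by
    by_contra! hcon
    obtain ⟨w, hw⟩ := hgne
    exact hw (all_zero (x := p) hgp (fun s hs => hC.zero s ⟨hs.1, hs.2.trans hcon⟩) w)
  have hnz : ∀ z ∈ Ioo q (p + 1), g z ≠ c := by
    intro z hz hzc
    obtain ⟨p', q', hC', hzC', -⟩ := exists_comp hg hgp hgne hzc
    obtain ⟨k', hk'⟩ := exists_rep hg hgp hgne hC'
    obtain ⟨e1, e2⟩ := Icc_inj (by linarith) (by linarith [hC'.le]) (htwo _ hk _ hk')
    rcases lt_or_ge k (k' + 1) with hl | hl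
    · have : (k : ℝ) ≤ k' := by exact_mod_cast (by omega : k ≤ k')
      linarith [hz.1, hzC'.2]
    · have : (k' : ℝ) + 1 ≤ k := by exact_mod_cast hl
      linarith [hz.2, hzC'.1]
  obtain ⟨m, hm1, hm2⟩ := exists_between hqp
  have hsh : AbB g c p ↔ AbB g c (p + 1) := by
    simpa using (abB_shift (c := c) (p := p) hgp 1).symm
  rw [hsh, abB_iff hg hm2 fun z hz => hnz z ⟨hm1.trans_le hz.1, hz.2⟩,
    abA_iff hg hm1 fun z hz => hnz z ⟨hz.1, hz.2.trans_lt hm2⟩]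

/-- If `K*` results from replacing the subarc of `K` on `[a,b]`
by the straight segment joining its endpoints, then no hyperplane is cut more
often by `K*` than by `K`; consequently `hₙ(K*) ⊆ hₙ(K)` for all `n`. -/
theorem cutCount_replace_arc_le (d : ℕ)
    (K Kstar : ℝ → EuclideanSpace ℝ (Fin d))
    (hK : Continuous K) (hper : Function.Periodic K 1)
    (hKs : Continuous Kstar) (hpers : Function.Periodic Kstar 1)
    (a b : ℝ) (hab : a < b) (hba : b ≤ a + 1)
    (hseg : ∀ t ∈ Icc a b,
      Kstar t = K a + ((t - a) / (b - a)) • (K b - K a))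
    (hsame : ∀ t ∈ Icc b (a + 1), Kstar t = K t) :
    (∀ (f : EuclideanSpace ℝ (Fin d) →L[ℝ] ℝ) (c : ℝ),
        cutCount Kstar f c ≤ cutCount K f c) ∧
    ∀ n : ℕ, hull Kstar n ⊆ hull K n := by
  have main : ∀ (f : EuclideanSpace ℝ (Fin d) →L[ℝ] ℝ) (c : ℝ),
      cutCount Kstar f c ≤ cutCount K f c := by
    intro f c
    obtain ⟨g, hgdef⟩ : ∃ g : ℝ → ℝ, g = fun t => f (K t) := ⟨_, rfl⟩
    obtain ⟨h, hhdef⟩ : ∃ h : ℝ → ℝ, h = fun t => f (Kstar t) := ⟨_, rfl⟩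
    have hg : Continuous g := by rw [hgdef]; exact f.continuous.comp hK
    have hh : Continuous h := by rw [hhdef]; exact f.continuous.comp hKs
    have hgp : Function.Periodic g 1 := fun t => by simp only [hgdef, hper t]
    have hhp : Function.Periodic h 1 := fun t => by simp only [hhdef, hpers t]
    have hba0 : b - a ≠ 0 := by linarith
    have hlin : ∀ t ∈ Icc a b,
        (b - a) * (h t - c) = (b - t) * (g a - c) + (t - a) * (g b - c) := by
      intro t ht
      have e : h t = g a + ((t - a) / (b - a)) * (g b - g a) := by
        simp only [hhdef, hgdef, hseg t ht, map_add, map_smul, map_sub, smul_eq_mul]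
      rw [e]
      field_simp
      ring
    have hE0 : ∀ t ∈ Icc b (a + 1), h t = g t := fun t ht => by
      simp only [hhdef, hgdef, hsame t ht]
    have hE : ∀ k : ℤ, ∀ t ∈ Icc (b + k) (a + 1 + k), h t = g t := by
      intro k t ht
      have h1 := per_int hhp k (t - k)
      have h2 := per_int hgp k (t - k)
      rw [sub_add_cancel] at h1 h2
      rw [h1, h2]
      exact hE0 _ ⟨by linarith [ht.1], by linarith [ht.2]⟩
    have hha : h a = g a := by
      have := hlin a ⟨le_rfl, hab.le⟩
      have h2 : (b - a) * (h a - g a) = 0 := by linarith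
      rcases mul_eq_zero.1 h2 with h | h
      · exact absurd h hba0
      · linarith
    have eg : cutCount K f c = if {t : ℝ | g t = c} = univ then 2
        else Cardinal.mk (circComps {t : ℝ | g t = c})
        + Cardinal.mk ({S ∈ circComps {t : ℝ | g t = c} | IsGlancing g c S} : Set (Set ℝ)) := by
      subst hgdef; rfl
    have eh : cutCount Kstar f c = if {t : ℝ | h t = c} = univ then 2
        else Cardinal.mk (circComps {t : ℝ | h t = c})
        + Cardinal.mk ({S ∈ circComps {t : ℝ | h t = c} | IsGlancing h c S} : Set (Set ℝ)) := by
      subst hhdef; rfl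
    rw [eg, eh]
    have hun : ∀ u : ℝ → ℝ, {t : ℝ | u t = c} = univ ↔ ∀ y, u y = c := fun u => by
      rw [eq_univ_iff_forall]; rfl
    by_cases hgu : ∀ y, g y = c
    · have hhu : ∀ y, h y = c := by
        apply all_zero (x := a) hhp
        intro t ht
        rcases le_total t b with htb | htb
        · have := hlin t ⟨ht.1, htb⟩
          rw [hgu a, hgu b, sub_self, mul_zero, mul_zero, add_zero] at this
          rcases mul_eq_zero.1 this with h | h
          · exact absurd h hba0
          · linarith
        · rw [hE0 t ⟨htb, ht.2⟩]; exact hgu t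
      rw [if_pos ((hun g).2 hgu), if_pos ((hun h).2 hhu)]
    · rw [if_neg (fun e => hgu ((hun g).1 e))]
      have hgne : ∃ y, g y ≠ c := by push Not at hgu; exact hgu
      by_cases hhu : ∀ y, h y = c
      · rw [if_pos ((hun h).2 hhu)]
        exact two_le_count (t := a) hg hgp hgne (by rw [← hha]; exact hhu a)
      · rw [if_neg (fun e => hhu ((hun h).1 e))]
        have hhne : ∃ y, h y ≠ c := by push Not at hhu; exact hhu
        exact count_le hg hgp hh hhp hab hba hgne hhne hlin hE
  exact ⟨main, fun n p hp f hf => (hp f hf).trans (main f (f p))⟩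
end
end

section
/- If p lies in the n-th hull hₙ(K) of a closed rectifiable curve K in ℝ³ with p ∉ K, then the cone from p over K has cone angle at least 2πn; that is, the length of the radial projection of K to the unit sphere centered at p is at least 2πn. -/
open Set
open scoped Classical

noncomputable section

variable {E : Type*} [NormedAddCommGroup E] [NormedSpace ℝ E]

open MeasureTheory Filter Topology

abbrev E3 := EuclideanSpace ℝ (Fin 3)

/-- Vectors `v` whose product with the family `h` is nonnegative and vanishes somewhere form a null set. -/
lemma null_touch {ι : Type*} (h : ι → E3) (h0 : ∀ t, h t ≠ 0) (s : Set ι) :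
    volume {v : E3 | (∀ t ∈ s, 0 ≤ inner ℝ v (h t)) ∧ ∃ t ∈ s, inner ℝ v (h t) = 0} = 0 := by
  set C : Set E3 := {v : E3 | ∀ t ∈ s, 0 ≤ inner ℝ v (h t)} with hC
  have hconv : Convex ℝ C := by
    intro x hx y hy a b ha hb hab t ht
    rw [inner_add_left, inner_smul_left, inner_smul_left]
    have h1 := mul_nonneg ha (hx t ht)
    have h2 := mul_nonneg hb (hy t ht)
    simpa using add_nonneg h1 h2
  refine measure_mono_null ?_ (hconv.addHaar_frontier volume)
  rintro v ⟨hv, t, ht, hvt⟩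
  refine ⟨subset_closure hv, fun hInt => ?_⟩
  have hc : Tendsto (fun e : ℝ => v - e • h t) (𝓝[>] 0) (𝓝 v) := by
    have : Continuous (fun e : ℝ => v - e • h t) := by fun_prop
    have h2 := (this.tendsto 0).mono_left (nhdsWithin_le_nhds (s := Ioi 0))
    simpa using h2
  have hev : ∀ᶠ e in 𝓝[>] (0:ℝ), v - e • h t ∈ C := hc (mem_interior_iff_mem_nhds.1 hInt)
  obtain ⟨e, he, hpos⟩ := (hev.and self_mem_nhdsWithin).exists
  have h3 := he t ht
  rw [inner_sub_left, hvt, inner_smul_left, real_inner_self_eq_norm_sq] at h3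
  have h4 : 0 < ‖h t‖ := norm_pos_iff.2 (h0 t)
  have h5 : 0 < e * ‖h t‖ ^ 2 := mul_pos hpos (by positivity)
  simp at h3
  linarith

/-- No zero of `g` is a one-sided extremum on an interval with rational endpoints. -/
def Generic (g : ℝ → ℝ) : Prop :=
  ∀ a b : ℚ, ¬ ((∀ t ∈ Icc (a : ℝ) b, 0 ≤ g t) ∧ ∃ t ∈ Icc (a : ℝ) b, g t = 0) ∧
    ¬ ((∀ t ∈ Icc (a : ℝ) b, 0 ≤ - g t) ∧ ∃ t ∈ Icc (a : ℝ) b, - g t = 0)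

lemma generic_ae (h : ℝ → E3) (h0 : ∀ t, h t ≠ 0) :
    ∀ᵐ v : E3, Generic (fun t => inner ℝ v (h t)) := by
  unfold Generic
  rw [ae_all_iff]; intro a
  rw [ae_all_iff]; intro b
  have h1 := null_touch h h0 (Icc (a : ℝ) b)
  have h2 := null_touch (fun t => - h t) (fun t => neg_ne_zero.2 (h0 t)) (Icc (a : ℝ) b)
  have h1' := measure_eq_zero_iff_ae_notMem.1 h1
  have h2' := measure_eq_zero_iff_ae_notMem.1 h2
  filter_upwards [h1', h2'] with v hv1 hv2
  refine ⟨hv1, ?_⟩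
  simpa only [mem_ofPred_eq, inner_neg_right] using hv2

lemma Generic.rat_ne {g : ℝ → ℝ} (hg : Generic g) (q : ℚ) : g q ≠ 0 := by
  intro h
  refine (hg q q).1 ⟨?_, q, by simp, h⟩
  intro t ht
  simp at ht
  rw [ht, h]

lemma Generic.exists_neg {g : ℝ → ℝ} (hg : Generic g) {z r : ℝ} (hr : 0 < r) (hz : g z = 0) :
    (∃ x, |x - z| < r ∧ g x < 0) ∧ ∃ x, |x - z| < r ∧ 0 < g x := by
  obtain ⟨a, ha1, ha2⟩ := exists_rat_btwn (show z - r < z by linarith)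
  obtain ⟨b, hb1, hb2⟩ := exists_rat_btwn (show z < z + r by linarith)
  constructor
  · by_contra! hcon
    exact (hg a b).1 ⟨fun t ht => hcon t (abs_lt.2 ⟨by linarith [ht.1], by linarith [ht.2]⟩),
      z, ⟨ha2.le, hb1.le⟩, hz⟩
  · by_contra! hcon
    exact (hg a b).2 ⟨fun t ht => by
      have := hcon t (abs_lt.2 ⟨by linarith [ht.1], by linarith [ht.2]⟩)
      linarith, z, ⟨ha2.le, hb1.le⟩, by simp [hz]⟩

lemma discrete_ivt (s : ℕ → ℝ) (hs : ∀ k, s k ≠ 0) (i d : ℕ) (h : s i * s (i + d) < 0) :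
    ∃ k, i ≤ k ∧ k < i + d ∧ s k * s (k + 1) < 0 := by
  induction d with
  | zero => simp at h; nlinarith [mul_self_nonneg (s i)]
  | succ d ih =>
    rcases lt_or_gt_of_ne (mul_ne_zero (hs i) (hs (i + d))) with h1 | h1
    · obtain ⟨k, a, b, c⟩ := ih h1
      exact ⟨k, a, by omega, c⟩
    · refine ⟨i + d, by omega, by omega, ?_⟩
      have h2 : (s i * s (i+d)) * (s i * s (i + (d+1))) < 0 := mul_neg_of_pos_of_neg h1 h
      have h3 : 0 < s i * s i := mul_self_pos.2 (hs i)
      by_contra! h4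
      rw [add_assoc] at h4
      nlinarith [mul_nonneg h3.le h4]

lemma grid_hit {U : Set ℝ} (hU : IsOpen U) {x : ℝ} (hx : x ∈ U) (hx0 : 0 ≤ x) :
    ∀ᶠ N : ℕ in atTop, ∃ i : ℕ, (i : ℝ) / N ∈ U := by
  have h := (tendsto_nat_floor_mul_div_atTop hx0).comp (tendsto_natCast_atTop_atTop (R := ℝ))
  filter_upwards [h (hU.mem_nhds hx)] with N hN
  exact ⟨_, hN⟩

lemma local_change {g : ℝ → ℝ} (hc : Continuous g) (hg : Generic g) {z : ℝ} (hz : g z = 0)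
    (hz01 : z ∈ Ioo (0 : ℝ) 1) {U : Set ℝ} (hU : IsOpen U) (hzU : z ∈ U) :
    ∀ᶠ N : ℕ in atTop, ∃ i : ℕ, i < N ∧ (i : ℝ) / N ∈ U ∧
      g ((i : ℝ) / N) * g (((i + 1 : ℕ) : ℝ) / N) < 0 := by
  obtain ⟨r, hr, hrU⟩ := Metric.isOpen_iff.1 (hU.inter isOpen_Ioo) z ⟨hzU, hz01⟩
  obtain ⟨⟨x, hx, hgx⟩, y, hy, hgy⟩ := hg.exists_neg hr hz
  have hb : ∀ x, |x - z| < r → x ∈ Metric.ball z r := fun x hx => by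
    simpa [Real.dist_eq] using hx
  have e1 := grid_hit (U := Metric.ball z r ∩ {t | g t < 0})
    (Metric.isOpen_ball.inter (isOpen_lt hc continuous_const)) ⟨hb x hx, hgx⟩
    (hrU (hb x hx)).2.1.le
  have e2 := grid_hit (U := Metric.ball z r ∩ {t | 0 < g t})
    (Metric.isOpen_ball.inter (isOpen_lt continuous_const hc)) ⟨hb y hy, hgy⟩
    (hrU (hb y hy)).2.1.le
  filter_upwards [e1, e2, eventually_gt_atTop 0] with N h1 h2 hN
  obtain ⟨i, hi, hgi⟩ := h1
  obtain ⟨j, hj, hgj⟩ := h2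
  have hN' : (0 : ℝ) < N := by exact_mod_cast hN
  have key : ∀ i j : ℕ, (i : ℝ) / N ∈ Metric.ball z r → (j : ℝ) / N ∈ Metric.ball z r → i ≤ j →
      g ((i : ℝ) / N) * g ((j : ℝ) / N) < 0 → ∃ i : ℕ, i < N ∧ (i : ℝ) / N ∈ U ∧
      g ((i : ℝ) / N) * g (((i + 1 : ℕ) : ℝ) / N) < 0 := by
    intro i j hi hj hij hneg
    obtain ⟨k, hk1, hk2, hk3⟩ := discrete_ivt (fun k : ℕ => g ((k : ℝ) / N))
      (fun k => by simpa using hg.rat_ne ((k : ℚ) / N)) i (j - i) (by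
        simpa [Nat.add_sub_cancel' hij] using hneg)
    have hkb : (k : ℝ) / N ∈ Metric.ball z r := by
      rw [Real.ball_eq_Ioo] at *
      have : (i : ℝ) / N ≤ k / N := by gcongr
      have h' : (k : ℝ) / N ≤ j / N := by
        have : k ≤ j := by omega
        gcongr
      exact ⟨by linarith [hi.1], by linarith [hj.2]⟩
    refine ⟨k, ?_, (hrU hkb).1, hk3⟩
    have := (hrU hkb).2.2
    rw [div_lt_one hN'] at this
    exact_mod_cast this
  rcases le_total i j with hij | hij
  · exact key i j hi hj hij (mul_neg_of_neg_of_pos hgi hgj)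
  · exact key j i hj hi hij (mul_neg_of_pos_of_neg hgj hgi)

lemma count_changes {g : ℝ → ℝ} (hc : Continuous g) (hg : Generic g) (T : Finset ℝ)
    (hT : ∀ z ∈ T, g z = 0 ∧ z ∈ Ioo (0 : ℝ) 1) :
    ∀ᶠ N : ℕ in atTop, T.card ≤ ((Finset.range N).filter (fun i : ℕ =>
      g ((i : ℝ) / N) * g (((i + 1 : ℕ) : ℝ) / N) < 0)).card := by
  obtain ⟨U, hU, hdis⟩ := T.finite_toSet.t2_separation
  have := (Filter.eventually_all_finset T).2 (fun z hz =>
    local_change hc hg (hT z hz).1 (hT z hz).2 (hU z).2 (hU z).1)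
  filter_upwards [this] with N hN
  choose! f hf using hN
  refine Finset.card_le_card_of_injOn f (fun z hz => ?_) ?_
  · simpa using ⟨(hf z hz).1, by simpa using (hf z hz).2.2⟩
  · intro z hz w hw hzw
    by_contra hne
    have h1 := (hf z hz).2.1
    have h2 := (hf w hw).2.1
    rw [← hzw] at h2
    exact Set.disjoint_left.1 (hdis hz hw hne) h1 h2

lemma Generic.zeros {g : ℝ → ℝ} (hc : Continuous g) (hg : Generic g) {m : ℕ}
    (h : (m : Cardinal) ≤ Cardinal.mk (circComps {t : ℝ | g t = 0})
      + Cardinal.mk ({S ∈ circComps {t : ℝ | g t = 0} | IsGlancing g 0 S})) :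
    ∃ T : Finset ℝ, T.card = m ∧ ∀ z ∈ T, g z = 0 ∧ z ∈ Ioo (0 : ℝ) 1 := by
  set Z : Set ℝ := {t : ℝ | g t = 0} with hZ
  have hcomp : ∀ t ∈ Z, connectedComponentIn Z t = {t} := by
    intro t ht
    have hsub : ∀ a b : ℝ, a < b → a ∈ connectedComponentIn Z t → b ∈ connectedComponentIn Z t →
        False := by
      intro a b hab ha hb
      have hI := isPreconnected_connectedComponentIn.Icc_subset ha hb
      obtain ⟨q, hq1, hq2⟩ := exists_rat_btwn hab
      have : (q : ℝ) ∈ Z := connectedComponentIn_subset _ _ (hI ⟨hq1.le, hq2.le⟩)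
      exact hg.rat_ne q this
    apply Subset.antisymm
    · intro s hs
      have ht' := mem_connectedComponentIn ht
      rcases lt_trichotomy s t with h1 | h1 | h1
      · exact (hsub s t h1 hs ht').elim
      · exact h1
      · exact (hsub t s h1 ht' hs).elim
    · intro s hs
      rw [mem_singleton_iff] at hs
      rw [hs]
      exact mem_connectedComponentIn ht
  have hmem : ∀ S ∈ circComps Z, ∃ t ∈ Z ∩ Ioo (0 : ℝ) 1, S = {t} := by
    rintro S ⟨t, ht, hS, hI⟩
    rw [hcomp t ht] at hS
    rw [hS, csInf_singleton] at hI
    refine ⟨t, ⟨ht, lt_of_le_of_ne hI.1 ?_, hI.2⟩, hS⟩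
    rintro rfl
    have := hg.rat_ne 0
    simp at this
    exact this ht
  have hle : Cardinal.mk (circComps Z) ≤ Cardinal.mk (Z ∩ Ioo (0 : ℝ) 1 : Set ℝ) := by
    have : circComps Z ⊆ (fun t : ℝ => ({t} : Set ℝ)) '' (Z ∩ Ioo (0 : ℝ) 1) := by
      intro S hS
      obtain ⟨t, ht, rfl⟩ := hmem S hS
      exact ⟨t, ht, rfl⟩
    exact (Cardinal.mk_le_mk_of_subset this).trans Cardinal.mk_image_le
  by_cases hfin : (Z ∩ Ioo (0 : ℝ) 1).Finite
  · have hempty : {S ∈ circComps Z | IsGlancing g 0 S} = ∅ := by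
      rw [eq_empty_iff_forall_notMem]
      rintro S ⟨hS, hgl⟩
      obtain ⟨t, ht, rfl⟩ := hmem S hS
      have hopen : IsOpen (Ioo (0 : ℝ) 1 ∩ ((Z ∩ Ioo (0 : ℝ) 1) \ {t})ᶜ) :=
        isOpen_Ioo.inter (hfin.subset sdiff_subset).isClosed.isOpen_compl
      obtain ⟨r, hr, hrU⟩ := Metric.isOpen_iff.1 hopen t ⟨ht.2, by simp⟩
      have hne : ∀ s, |s - t| < r → s ≠ t → g s ≠ 0 := by
        intro s hs hst h0
        have h1 := hrU (show s ∈ Metric.ball t r by simpa [Real.dist_eq] using hs)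
        exact h1.2 ⟨⟨h0, h1.1⟩, hst⟩
      have hside : ∀ a b : ℝ, (∀ s ∈ Ioo a b, g s ≠ 0) →
          (∀ s ∈ Ioo a b, 0 < g s) ∨ (∀ s ∈ Ioo a b, g s < 0) := by
        intro a b hab
        by_contra! hcon
        obtain ⟨⟨x, hx, hgx⟩, y, hy, hgy⟩ := hcon
        obtain ⟨z, hz, hz0⟩ := isPreconnected_Ioo.intermediate_value hx hy
          hc.continuousOn ⟨hgx, hgy⟩
        exact hab z hz hz0
      have hR := hside t (t + r) (fun s hs => hne s (abs_lt.2 ⟨by linarith [hs.1], by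
        linarith [hs.2]⟩) hs.1.ne')
      have hL := hside (t - r) t (fun s hs => hne s (abs_lt.2 ⟨by linarith [hs.1], by
        linarith [hs.2]⟩) hs.2.ne)
      obtain ⟨⟨x, hx, hgx⟩, y, hy, hgy⟩ := hg.exists_neg hr (show g t = 0 from ht.1)
      have ht0 : g t = 0 := ht.1
      rw [abs_lt] at hx hy
      unfold IsGlancing AboveBefore AboveAfter at hgl
      simp only [csSup_singleton, csInf_singleton] at hgl
      rcases hR with hR | hR
      · obtain ⟨e, he, hb⟩ := hgl.2 ⟨r, hr, hR⟩
        have hL' : ∀ s ∈ Ioo (t - r) t, 0 < g s := by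
          rcases hL with hL | hL
          · exact hL
          · have hm : max (t - e) (t - r) < t := max_lt (by linarith) (by linarith)
            obtain ⟨q, hq1, hq2⟩ := exists_between hm
            have h1 := hb q ⟨(le_max_left _ _).trans_lt hq1, hq2⟩
            have h2 := hL q ⟨(le_max_right _ _).trans_lt hq1, hq2⟩
            linarith
        rcases lt_trichotomy x t with h1 | h1 | h1
        · linarith [hL' x ⟨by linarith [hx.1], h1⟩]
        · rw [h1] at hgx; linarith
        · linarith [hR x ⟨h1, by linarith [hx.2]⟩]
      · have hL' : ∀ s ∈ Ioo (t - r) t, g s < 0 := by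
          rcases hL with hL | hL
          · obtain ⟨e, he, hb⟩ := hgl.1 ⟨r, hr, hL⟩
            have hm : t < min (t + e) (t + r) := lt_min (by linarith) (by linarith)
            obtain ⟨q, hq1, hq2⟩ := exists_between hm
            have h1 := hb q ⟨hq1, hq2.trans_le (min_le_left _ _)⟩
            have h2 := hR q ⟨hq1, hq2.trans_le (min_le_right _ _)⟩
            linarith
          · exact hL
        rcases lt_trichotomy y t with h1 | h1 | h1
        · linarith [hL' y ⟨by linarith [hy.1], h1⟩]
        · rw [h1] at hgy; linarith
        · linarith [hR y ⟨h1, by linarith [hy.2]⟩]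
    rw [hempty, Cardinal.mk_eq_zero (∅ : Set (Set ℝ)), add_zero] at h
    have h2 := h.trans hle
    rw [← hfin.coe_toFinset] at h2
    have h3 : m ≤ hfin.toFinset.card := by
      have h4 : Cardinal.mk (hfin.toFinset : Set ℝ) = (hfin.toFinset.card : Cardinal) :=
        Cardinal.mk_coe_finset
      rw [h4] at h2
      exact_mod_cast h2
    obtain ⟨T, hT, hcard⟩ := Finset.exists_subset_card_eq h3
    refine ⟨T, hcard, fun z hz => ?_⟩
    have := hT hz
    rw [Set.Finite.mem_toFinset] at this
    exact this
  · obtain ⟨T, hT, hcard⟩ := Set.Infinite.exists_subset_card_eq hfin m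
    exact ⟨T, hcard, fun z hz => hT hz⟩

/-- The set of `v` in the unit ball for which `a` and `b` lie strictly on opposite sides. -/
def lune (a b : E3) : Set E3 := {v | inner ℝ v a * inner ℝ v b < 0} ∩ Metric.ball 0 1

lemma lune_measurable (a b : E3) : MeasurableSet (lune a b) := by
  refine (IsOpen.inter ?_ Metric.isOpen_ball).measurableSet
  exact isOpen_lt (by fun_prop) continuous_const

lemma lune_map (R : E3 ≃ₗᵢ[ℝ] E3) (a b : E3) :
    volume (lune (R a) (R b)) = volume (lune a b) := by
  have h := R.measurePreserving.measure_preimage (lune_measurable (R a) (R b)).nullMeasurableSet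
  rw [← h]
  congr 1
  ext v
  simp [lune, R.inner_map_map]

/-- A sinusoid changes its sign at most once over a half period. -/
lemma sinusoid (p q x y z : ℝ) (hxy : x < y) (hyz : y < z) (hzx : z - x ≤ Real.pi)
    (h1 : (p * Real.cos x + q * Real.sin x) * (p * Real.cos y + q * Real.sin y) < 0)
    (h2 : (p * Real.cos y + q * Real.sin y) * (p * Real.cos z + q * Real.sin z) < 0) : False := by
  have id : (p * Real.cos y + q * Real.sin y) * Real.sin (z - x) =
      (p * Real.cos x + q * Real.sin x) * Real.sin (z - y) +
      (p * Real.cos z + q * Real.sin z) * Real.sin (y - x) := by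
    simp only [Real.sin_sub]
    ring_nf
  have s1 : 0 ≤ Real.sin (z - x) := Real.sin_nonneg_of_nonneg_of_le_pi (by linarith) hzx
  have s2 : 0 < Real.sin (z - y) := Real.sin_pos_of_pos_of_lt_pi (by linarith) (by linarith)
  have s3 : 0 < Real.sin (y - x) := Real.sin_pos_of_pos_of_lt_pi (by linarith) (by linarith)
  generalize p * Real.cos x + q * Real.sin x = A at *
  generalize p * Real.cos y + q * Real.sin y = B at *
  generalize p * Real.cos z + q * Real.sin z = C at *
  have id2 : B * B * Real.sin (z - x) = A * B * Real.sin (z - y) + B * C * Real.sin (y - x) := by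
    rw [mul_assoc, id]; ring
  have := mul_nonneg (mul_self_nonneg B) s1
  have := mul_neg_of_neg_of_pos h1 s2
  have := mul_neg_of_neg_of_pos h2 s3
  linarith

lemma sinusoid4 (p q x y z w : ℝ) (hxy : x < y) (hyz : y ≤ z) (hzw : z < w)
    (hzx : w - x ≤ Real.pi)
    (h1 : (p * Real.cos x + q * Real.sin x) * (p * Real.cos y + q * Real.sin y) < 0)
    (h2 : (p * Real.cos z + q * Real.sin z) * (p * Real.cos w + q * Real.sin w) < 0) : False := by
  rcases hyz.eq_or_lt with rfl | hyz
  · exact sinusoid p q x y w hxy hzw hzx h1 h2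
  by_cases h3 : (p * Real.cos y + q * Real.sin y) * (p * Real.cos z + q * Real.sin z) < 0
  · exact sinusoid p q x y z hxy hyz (by linarith) h1 h3
  · apply sinusoid p q x y w hxy (by linarith) hzx h1
    push Not at h3
    generalize p * Real.cos x + q * Real.sin x = A at *
    generalize p * Real.cos y + q * Real.sin y = B at *
    generalize p * Real.cos z + q * Real.sin z = C at *
    generalize p * Real.cos w + q * Real.sin w = D at *
    by_contra! h4
    have hC : 0 < C * C := mul_self_pos.2 (by rintro rfl; simp at h2)
    have hB : B ≠ 0 := by rintro rfl; simp at h1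
    have hCD := h2
    have h5 := mul_nonneg h3 h4
    have hBB : 0 < B * B := mul_self_pos.2 hB
    nlinarith [mul_pos hBB (neg_pos.2 h2)]

/-- The frame `e` turned by the angle `x` in the plane of its first two vectors. -/
lemma rot_exists (e : OrthonormalBasis (Fin 3) ℝ E3) (x : ℝ) :
    ∃ R : E3 ≃ₗᵢ[ℝ] E3, ∀ y, R (Real.cos y • e 0 + Real.sin y • e 1) =
      Real.cos (x + y) • e 0 + Real.sin (x + y) • e 1 := by
  have h00 : ∀ i j, inner ℝ (e i) (e j) = if i = j then (1 : ℝ) else 0 :=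
    fun i j => orthonormal_iff_ite.1 e.orthonormal i j
  have hsc := Real.sin_sq_add_cos_sq x
  let v : Fin 3 → E3 := ![Real.cos x • e 0 + Real.sin x • e 1,
    -Real.sin x • e 0 + Real.cos x • e 1, e 2]
  have hv : Orthonormal ℝ v := by
    rw [orthonormal_iff_ite]
    intro i j
    fin_cases i <;> fin_cases j <;>
      simp only [v, inner_add_left, inner_add_right, inner_smul_left, inner_smul_right, h00,
        Fin.zero_eta, Fin.mk_one, Fin.reduceFinMk, Matrix.cons_val_zero, Matrix.cons_val_one,
        Matrix.cons_val] <;>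
      simp <;> nlinarith
  obtain ⟨e', he'⟩ := Orthonormal.exists_orthonormalBasis_extension_of_card_eq
    (𝕜 := ℝ) (E := E3) (ι := Fin 3) (by simp) (v := v) (s := univ)
    (hv.comp _ Subtype.val_injective)
  refine ⟨e.equiv e' (Equiv.refl _), fun y => ?_⟩
  rw [map_add, map_smul, map_smul, OrthonormalBasis.equiv_apply_basis,
    OrthonormalBasis.equiv_apply_basis]
  simp only [Equiv.refl_apply, he' _ (mem_univ _), v, Matrix.cons_val_zero, Matrix.cons_val_one,
    Real.cos_add, Real.sin_add]
  module

lemma lune_mul_le (e : OrthonormalBasis (Fin 3) ℝ E3) (x : ℝ) (hx : 0 < x) (m : ℕ)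
    (hm : m * x ≤ Real.pi) :
    m * volume (lune (e 0) (Real.cos x • e 0 + Real.sin x • e 1)) ≤
      volume (Metric.ball (0 : E3) 1) := by
  set u : ℝ → E3 := fun y => Real.cos y • e 0 + Real.sin y • e 1 with hu
  have h1 : ∀ k : ℕ, volume (lune (u (k * x)) (u ((k + 1) * x))) = volume (lune (u 0) (u x)) := by
    intro k
    obtain ⟨R, hR⟩ := rot_exists e (k * x)
    have := lune_map R (u 0) (u x)
    simp only [hu] at this ⊢
    rw [hR, hR, add_zero] at this
    rw [← this, add_mul, one_mul]
  have h2 : u 0 = e 0 := by simp [hu]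
  rw [h2] at h1
  have hdis : (↑(Finset.range m) : Set ℕ).PairwiseDisjoint
      (fun k : ℕ => lune (u (k * x)) (u ((k + 1) * x))) := by
    have main : ∀ j k : ℕ, j < k → k < m →
      Disjoint (lune (u (j * x)) (u ((j + 1) * x))) (lune (u (k * x)) (u ((k + 1) * x))) := by
      intro j k hjk hkm
      rw [Set.disjoint_left]
      rintro v ⟨hv1, -⟩ ⟨hv2, -⟩
      have hin : ∀ y, inner ℝ v (u y) =
          inner ℝ v (e 0) * Real.cos y + inner ℝ v (e 1) * Real.sin y := by
        intro y
        simp only [hu, inner_add_right, inner_smul_right]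
        ring
      simp only [mem_ofPred_eq, hin] at hv1 hv2
      have hjk' : (j : ℝ) + 1 ≤ k := by exact_mod_cast hjk
      have hkm' : (k : ℝ) + 1 ≤ m := by exact_mod_cast hkm
      have hj : (0 : ℝ) ≤ j := by positivity
      refine sinusoid4 _ _ (j * x) ((j + 1) * x) (k * x) ((k + 1) * x) ?_ ?_ ?_ ?_ hv1 hv2
      · nlinarith
      · nlinarith
      · nlinarith
      · nlinarith
    intro j hj k hk hjk
    simp at hj hk
    rcases lt_or_gt_of_ne hjk with h | h
    · exact main j k h hk
    · exact (main k j h hj).symm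
  have h3 := measure_biUnion_finset (μ := volume) hdis (fun k _ => lune_measurable _ _)
  simp only [h1, Finset.sum_const, Finset.card_range, nsmul_eq_mul] at h3
  rw [← h3]
  exact measure_mono (by simp [lune])

lemma lune_le (a b : E3) (ha : ‖a‖ = 1) (hb : ‖b‖ = 1) (δ : ℝ) (hδ : 0 < δ) (hδ1 : δ < 1)
    (hab : ‖b - a‖ ≤ δ) :
    volume (lune a b) ≤ ENNReal.ofReal (‖b - a‖ / ((1 - δ ^ 2) * (Real.pi - 2 * δ))) *
      volume (Metric.ball (0 : E3) 1) := by
  set x := InnerProductGeometry.angle a b with hx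
  have hx0 : 0 ≤ x := InnerProductGeometry.angle_nonneg a b
  have hxpi : x ≤ Real.pi := InnerProductGeometry.angle_le_pi a b
  have hcos : Real.cos x = inner ℝ a b := by
    rw [hx, InnerProductGeometry.cos_angle, ha, hb]; simp
  have hpi := Real.pi_gt_three
  have hpi4 := Real.pi_lt_four
  -- chord
  have hch : ‖b - a‖ = 2 * Real.sin (x / 2) := by
    have hs : 0 ≤ Real.sin (x / 2) := Real.sin_nonneg_of_nonneg_of_le_pi (by linarith) (by linarith)
    have h1 : ‖b - a‖ ^ 2 = (2 * Real.sin (x / 2)) ^ 2 := by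
      rw [norm_sub_sq_real, ha, hb, real_inner_comm, ← hcos, mul_pow, Real.sin_sq_eq_half_sub]
      rw [show 2 * (x / 2) = x by ring]
      ring
    exact (pow_left_inj₀ (norm_nonneg _) (by linarith) two_ne_zero).1 h1
  rcases hx0.eq_or_lt with h0 | hxpos
  · have : a = b := by
      rw [← h0] at hch
      simp at hch
      exact (sub_eq_zero.1 hch).symm
    subst this
    have : lune a a = ∅ := by
      rw [eq_empty_iff_forall_notMem]
      rintro v ⟨hv, -⟩
      exact absurd (show inner ℝ v a * inner ℝ v a < (0 : ℝ) from hv)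
        (not_lt.2 (mul_self_nonneg _))
    simp [this]
  have hj : x / 2 ≤ Real.pi / 2 * Real.sin (x / 2) := by
    have := Real.mul_le_sin (x := x / 2) (by linarith) (by linarith)
    have h2 := mul_le_mul_of_nonneg_left this (show 0 ≤ Real.pi / 2 by positivity)
    have h3 : Real.pi / 2 * (2 / Real.pi * (x / 2)) = x / 2 := by field_simp
    linarith
  have hx2 : x ≤ 2 * δ := by nlinarith
  have hc2 : x * (1 - δ ^ 2) ≤ ‖b - a‖ := by
    have := Real.sin_gt_sub_cube (x := x / 2) (by linarith)
    rw [hch]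
    have : x ^ 2 ≤ 4 * δ ^ 2 := by nlinarith
    nlinarith
  have hsin : 0 < Real.sin x := Real.sin_pos_of_pos_of_lt_pi hxpos (by linarith)
  set w : E3 := (Real.sin x)⁻¹ • (b - Real.cos x • a) with hw
  have hbw : b = Real.cos x • a + Real.sin x • w := by
    rw [hw, smul_smul, mul_inv_cancel₀ hsin.ne']; simp
  have haa : inner ℝ a a = (1 : ℝ) := by rw [real_inner_self_eq_norm_sq, ha]; simp
  have hbb : inner ℝ b b = (1 : ℝ) := by rw [real_inner_self_eq_norm_sq, hb]; simp
  have haw : inner ℝ a w = (0 : ℝ) := by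
    rw [hw, inner_smul_right, inner_sub_right, inner_smul_right, haa, hcos]; simp
  have hww : inner ℝ w w = (1 : ℝ) := by
    have h1 := hbb
    rw [hbw] at h1
    simp only [inner_add_left, inner_add_right, inner_smul_left, inner_smul_right, haa, haw,
      real_inner_comm a w] at h1
    simp at h1
    have h2 := Real.sin_sq_add_cos_sq x
    have h3 : Real.sin x ^ 2 * inner ℝ w w = Real.sin x ^ 2 * 1 := by
      rw [real_inner_self_eq_norm_sq]
      nlinarith
    exact mul_left_cancel₀ (by positivity) h3
  have hwa : inner ℝ w a = (0 : ℝ) := by rw [real_inner_comm, haw]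
  have hwn : ‖w‖ = 1 := by
    rw [real_inner_self_eq_norm_sq] at hww
    nlinarith [norm_nonneg w]
  obtain ⟨e, he⟩ := Orthonormal.exists_orthonormalBasis_extension_of_card_eq
    (𝕜 := ℝ) (E := E3) (ι := Fin 3) (by simp) (v := ![a, w, 0]) (s := {0, 1}) (by
      rw [orthonormal_iff_ite]
      rintro ⟨i, hi⟩ ⟨j, hj⟩
      simp only [mem_insert_iff, mem_singleton_iff] at hi hj
      rcases hi with rfl | rfl <;> rcases hj with rfl | rfl <;>
        simp [haw, hwa, ha, hwn])
  have he0 : e 0 = a := he 0 (by simp)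
  have he1 : e 1 = w := he 1 (by simp)
  set m := ⌊Real.pi / x⌋₊ with hm
  have hmx : m * x ≤ Real.pi := by
    have := Nat.floor_le (show 0 ≤ Real.pi / x by positivity)
    rwa [← hm, le_div_iff₀ hxpos] at this
  have hmx2 : Real.pi - x < m * x := by
    have := Nat.lt_floor_add_one (Real.pi / x)
    rw [← hm, div_lt_iff₀ hxpos] at this
    linarith
  have key := lune_mul_le e x hxpos m hmx
  rw [he0, he1, ← hbw] at key
  have hmpos : (0 : ℝ) < m := by
    by_contra! h
    nlinarith
  have hF : (m : ℝ)⁻¹ ≤ ‖b - a‖ / ((1 - δ ^ 2) * (Real.pi - 2 * δ)) := by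
    have hA : 0 < 1 - δ ^ 2 := by nlinarith
    have hB : 0 < Real.pi - 2 * δ := by linarith
    rw [le_div_iff₀ (mul_pos hA hB), inv_mul_le_iff₀ hmpos]
    calc (1 - δ ^ 2) * (Real.pi - 2 * δ) ≤ (1 - δ ^ 2) * (m * x) := by
          gcongr; linarith
      _ = m * (x * (1 - δ ^ 2)) := by ring
      _ ≤ _ := by gcongr
  calc volume (lune a b) = ENNReal.ofReal ((m : ℝ)⁻¹) * (m * volume (lune a b)) := by
        rw [← mul_assoc, ENNReal.ofReal_inv_of_pos hmpos, ENNReal.ofReal_natCast,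
          ENNReal.inv_mul_cancel, one_mul]
        · exact_mod_cast hmpos.ne'
        · exact ENNReal.natCast_ne_top m
    _ ≤ _ := mul_le_mul' (ENNReal.ofReal_le_ofReal hF) key

lemma lune_smul (a b : E3) {c d : ℝ} (hc : 0 < c) (hd : 0 < d) :
    lune (c • a) (d • b) = lune a b := by
  ext v
  have h1 : inner ℝ v (c • a) * inner ℝ v (d • b) =
      (c * d) * (inner ℝ v a * inner ℝ v b) := by
    rw [inner_smul_right, inner_smul_right]; ring
  have h2 : (c * d) * (inner ℝ v a * inner ℝ v b) < 0 ↔ inner ℝ v a * inner ℝ v b < 0 :=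
    ⟨fun h => by by_contra! h'; exact absurd h (not_lt.2 (mul_nonneg (mul_pos hc hd).le h')),
      fun h => mul_neg_of_pos_of_neg (mul_pos hc hd) h⟩
  simp only [lune, mem_inter_iff, mem_ofPred_eq, h1, h2]

lemma hull_zeros (n : ℕ) (K : ℝ → E3) (hK : Continuous K) (p : E3) (hp : p ∈ hull K n) (v : E3)
    (hg : Generic (fun t => inner ℝ v (K t - p))) :
    ∃ T : Finset ℝ, T.card = 2 * n ∧
      ∀ z ∈ T, inner ℝ v (K z - p) = (0 : ℝ) ∧ z ∈ Ioo (0 : ℝ) 1 := by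
  apply hg.zeros (g := fun t => inner ℝ v (K t - p)) (by fun_prop)
  have hg0 : inner ℝ v (K 0 - p) ≠ (0 : ℝ) := by simpa using hg.rat_ne 0
  have hf : innerSL ℝ v ≠ 0 := by
    intro h
    apply hg0
    have := congrArg (fun f : E3 →L[ℝ] ℝ => f (K 0 - p)) h
    simpa using this
  have h := hp (innerSL ℝ v) hf
  unfold CutsAtLeast cutCount at h
  have hset : {t : ℝ | innerSL ℝ v (K t) = innerSL ℝ v p} =
      {t : ℝ | inner ℝ v (K t - p) = (0 : ℝ)} := by
    ext t
    simp [inner_sub_right, sub_eq_zero]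
  have hgl : ∀ S, IsGlancing (fun t => innerSL ℝ v (K t)) (innerSL ℝ v p) S ↔
      IsGlancing (fun t => inner ℝ v (K t - p)) 0 S := by
    intro S
    simp [IsGlancing, AboveBefore, AboveAfter, inner_sub_right]
  rw [hset, if_neg] at h
  · simpa only [hgl] using h
  · intro hu
    have : (0 : ℝ) ∈ {t : ℝ | inner ℝ v (K t - p) = (0 : ℝ)} := by rw [hu]; trivial
    exact hg0 this

lemma main_bound (n : ℕ) (K : ℝ → E3) (hK : Continuous K)
    (p : E3) (hp : p ∈ hull K n) (hpK : p ∉ Set.range K) (δ : ℝ) (hδ : 0 < δ) (hδ1 : δ < 1) :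
    ENNReal.ofReal (2 * n * ((1 - δ ^ 2) * (Real.pi - 2 * δ))) ≤
      eVariationOn (fun t => ‖K t - p‖⁻¹ • (K t - p)) (Icc (0 : ℝ) 1) := by
  set γ : ℝ → E3 := fun t => ‖K t - p‖⁻¹ • (K t - p) with hγ
  set L := eVariationOn γ (Icc (0 : ℝ) 1) with hL
  set B := volume (Metric.ball (0 : E3) 1) with hB
  set F : ℝ := (1 - δ ^ 2) * (Real.pi - 2 * δ) with hF
  have hFpos : 0 < F := by
    have hpi := Real.pi_gt_three
    exact mul_pos (by nlinarith) (by linarith)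
  have h0 : ∀ t, K t - p ≠ 0 := fun t h => hpK ⟨t, sub_eq_zero.1 h⟩
  have hn : ∀ t, 0 < ‖K t - p‖⁻¹ := fun t => inv_pos.2 (norm_pos_iff.2 (h0 t))
  have hγ1 : ∀ t, ‖γ t‖ = 1 := fun t => by
    simp only [hγ, norm_smul, norm_inv, norm_norm]
    exact inv_mul_cancel₀ (norm_pos_iff.2 (h0 t)).ne'
  have hγc : Continuous γ := by
    have h1 : Continuous (fun t => K t - p) := by fun_prop
    exact (h1.norm.inv₀ (fun t => (norm_pos_iff.2 (h0 t)).ne')).smul h1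
  let D : ℕ → ℕ → Set E3 := fun N i => lune (K ((i : ℝ) / N) - p) (K (((i + 1 : ℕ) : ℝ) / N) - p)
  let cnt : ℕ → E3 → ENNReal := fun N v => ∑ i ∈ Finset.range N, (D N i).indicator 1 v
  have hDm : ∀ N i, MeasurableSet (D N i) := fun N i => lune_measurable _ _
  have hmeas : ∀ N, Measurable (cnt N) := fun N =>
    Finset.measurable_fun_sum _ (fun i _ => measurable_one.indicator (hDm N i))
  have hInt : ∀ N, ∫⁻ v, cnt N v = ∑ i ∈ Finset.range N, volume (D N i) := by
    intro N
    rw [lintegral_finsetSum _ (fun i _ => measurable_one.indicator (hDm N i))]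
    exact Finset.sum_congr rfl (fun i _ => lintegral_indicator_one (hDm N i))
  -- lower bound
  have hlow : ((2 * n : ℕ) : ENNReal) * B ≤ ∫⁻ v, liminf (fun N => cnt N v) atTop := by
    calc ((2 * n : ℕ) : ENNReal) * B
        = ∫⁻ v : E3, (Metric.ball (0 : E3) 1).indicator (fun _ => ((2 * n : ℕ) : ENNReal)) v := by
          rw [lintegral_indicator_const Metric.isOpen_ball.measurableSet]
      _ ≤ _ := by
        apply lintegral_mono_ae
        filter_upwards [generic_ae (fun t => K t - p) h0] with v hv
        by_cases hvb : v ∈ Metric.ball (0 : E3) 1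
        · rw [indicator_of_mem hvb]
          obtain ⟨T, hT, hTz⟩ := hull_zeros n K hK p hp v hv
          have hcc := count_changes (g := fun t => inner ℝ v (K t - p)) (by fun_prop) hv T hTz
          apply le_liminf_of_le (by isBoundedDefault)
          filter_upwards [hcc] with N hN
          rw [hT] at hN
          calc ((2 * n : ℕ) : ENNReal) ≤ _ := Nat.cast_le.2 hN
            _ = ∑ i ∈ Finset.range N, (D N i).indicator 1 v := by
              rw [Finset.card_filter, Nat.cast_sum]
              refine Finset.sum_congr rfl (fun i _ => ?_)
              simp only [indicator_apply, D, lune, mem_inter_iff, mem_ofPred_eq, hvb, and_true]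
              split_ifs <;> simp
        · rw [indicator_of_notMem hvb]
          exact zero_le
  have hup : ∀ᶠ N : ℕ in atTop, ∑ i ∈ Finset.range N, volume (D N i) ≤
      ENNReal.ofReal F⁻¹ * L * B := by
    have huc := (isCompact_Icc (a := (0 : ℝ)) (b := 1)).uniformContinuousOn_of_continuous
      hγc.continuousOn
    obtain ⟨r, hr, hru⟩ := Metric.uniformContinuousOn_iff.1 huc δ hδ
    have hN0 := tendsto_one_div_atTop_nhds_zero_nat (𝕜 := ℝ)
    filter_upwards [hN0 (Iio_mem_nhds hr), eventually_gt_atTop 0] with N hN1 hN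
    have hN' : (0 : ℝ) < N := by exact_mod_cast hN
    have hN1' : (1 : ℝ) / N < r := hN1
    have hmem : ∀ i ≤ N, (i : ℝ) / N ∈ Icc (0 : ℝ) 1 := fun i hi =>
      ⟨by positivity, by rw [div_le_one hN']; exact_mod_cast hi⟩
    have hterm : ∀ i ∈ Finset.range N, volume (D N i) ≤ ENNReal.ofReal F⁻¹ *
        edist (γ (((i + 1 : ℕ) : ℝ) / N)) (γ ((i : ℝ) / N)) * B := by
      intro i hi
      have hi' := Finset.mem_range.1 hi
      have hD : D N i = lune (γ ((i : ℝ) / N)) (γ (((i + 1 : ℕ) : ℝ) / N)) :=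
        (lune_smul _ _ (hn _) (hn _)).symm
      have hd : ‖γ (((i + 1 : ℕ) : ℝ) / N) - γ ((i : ℝ) / N)‖ ≤ δ := by
        rw [← dist_eq_norm]
        refine (hru _ (hmem _ hi') _ (hmem _ hi'.le) ?_).le
        rw [Real.dist_eq, ← sub_div, Nat.cast_succ, add_sub_cancel_left,
          abs_of_pos (by positivity)]
        exact hN1'
      rw [hD]
      refine (lune_le _ _ (hγ1 _) (hγ1 _) δ hδ hδ1 hd).trans (le_of_eq ?_)
      rw [div_eq_inv_mul, ENNReal.ofReal_mul (by positivity), edist_dist, dist_eq_norm]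
    refine (Finset.sum_le_sum hterm).trans ?_
    rw [← Finset.sum_mul, ← Finset.mul_sum]
    gcongr
    have hs := eVariationOn.sum_le (f := γ) (s := Icc (0 : ℝ) 1) (n := N)
      (u := fun i : ℕ => ((min i N : ℕ) : ℝ) / N) (by
        intro i j hij
        simp only
        gcongr) (fun i => hmem _ (min_le_right _ _))
    refine le_trans (le_of_eq (Finset.sum_congr rfl (fun i hi => ?_))) hs
    have hi' := Finset.mem_range.1 hi
    simp only [min_eq_left hi'.le, min_eq_left (Nat.succ_le_of_lt hi')]
  have hfin : ((2 * n : ℕ) : ENNReal) * B ≤ ENNReal.ofReal F⁻¹ * L * B := by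
    refine hlow.trans ((lintegral_liminf_le hmeas).trans ?_)
    simp only [hInt]
    refine liminf_le_of_frequently_le' ?_
    exact hup.frequently
  have hB0 : B ≠ 0 := (Metric.measure_ball_pos volume (0 : E3) one_pos).ne'
  have hBt : B ≠ ⊤ := measure_ball_lt_top.ne
  have h2 : ((2 * n : ℕ) : ENNReal) ≤ ENNReal.ofReal F⁻¹ * L :=
    (ENNReal.mul_le_mul_iff_left hB0 hBt).1 hfin
  calc ENNReal.ofReal (2 * n * F) = ENNReal.ofReal F * ((2 * n : ℕ) : ENNReal) := by
        rw [mul_comm, ENNReal.ofReal_mul hFpos.le]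
        congr 1
        rw [← ENNReal.ofReal_natCast]; push_cast; rfl
    _ ≤ ENNReal.ofReal F * (ENNReal.ofReal F⁻¹ * L) := by gcongr
    _ = L := by
      rw [← mul_assoc, ← ENNReal.ofReal_mul hFpos.le, mul_inv_cancel₀ hFpos.ne']; simp

/-- If `p` lies in the `n`-th hull of a closed rectifiable curve
`K` in `ℝ³` and `p ∉ K`, then the cone angle of `K` at `p`, i.e. the length of the
radial projection of `K` to the unit sphere about `p`, is at least `2πn`. -/
theorem coneAngle_ge_of_mem_hull (n : ℕ)
    (K : ℝ → EuclideanSpace ℝ (Fin 3))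
    (hK : Continuous K) (hper : Function.Periodic K 1)
    (hrect : eVariationOn K (Icc (0 : ℝ) 1) ≠ ⊤)
    (p : EuclideanSpace ℝ (Fin 3)) (hp : p ∈ hull K n) (hpK : p ∉ Set.range K) :
    ENNReal.ofReal (2 * Real.pi * n) ≤
      eVariationOn (fun t => ‖K t - p‖⁻¹ • (K t - p)) (Icc (0 : ℝ) 1) := by
  have hc : Continuous (fun δ : ℝ => ENNReal.ofReal (2 * n * ((1 - δ ^ 2) * (Real.pi - 2 * δ)))) :=
    ENNReal.continuous_ofReal.comp (by fun_prop)
  have ht := (hc.tendsto 0).mono_left (nhdsWithin_le_nhds (s := Ioi 0))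
  have h0 : 2 * (n : ℝ) * ((1 - (0 : ℝ) ^ 2) * (Real.pi - 2 * 0)) = 2 * Real.pi * n := by ring
  rw [h0] at ht
  refine le_of_tendsto ht ?_
  filter_upwards [self_mem_nhdsWithin, nhdsWithin_le_nhds (Iio_mem_nhds one_pos)] with δ h1 h2
  exact main_bound n K hK p hp hpK δ h1 h2
end
end

section
/- The length of a closed rectifiable curve on the unit sphere S² equals π times the average, over the uniform measure on unit vectors u, of the number of intersections of the curve with the great circle u^⊥ ∩ S². -/
open Set MeasureTheory Metric
open scoped RealInnerProductSpace ENNReal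

noncomputable section

open scoped Pointwise in
/-- Sphere measure of a cone. -/
lemma toSphere_cone (A : Set (EuclideanSpace ℝ (Fin 3))) (hA : MeasurableSet A)
    (hc : ∀ r : ℝ, 0 < r → ∀ v, r • v ∈ A ↔ v ∈ A) :
    (volume : Measure (EuclideanSpace ℝ (Fin 3))).toSphere
      {u : sphere (0 : EuclideanSpace ℝ (Fin 3)) 1 | (u : EuclideanSpace ℝ (Fin 3)) ∈ A} =
      3 * volume (ball 0 1 ∩ A) := by
  have hm : MeasurableSet
      {u : sphere (0 : EuclideanSpace ℝ (Fin 3)) 1 | (u : EuclideanSpace ℝ (Fin 3)) ∈ A} :=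
    measurable_subtype_coe hA
  rw [Measure.toSphere_apply' _ hm]
  have h1 : Ioo (0 : ℝ) 1 • (Subtype.val '' {u : sphere (0 : EuclideanSpace ℝ (Fin 3)) 1 |
      (u : EuclideanSpace ℝ (Fin 3)) ∈ A}) = (ball (0 : EuclideanSpace ℝ (Fin 3)) 1 ∩ A) \ {0} := by
    ext v
    constructor
    · rintro ⟨r, hr, w, ⟨u, hu, rfl⟩, rfl⟩
      have hn : ‖(u : EuclideanSpace ℝ (Fin 3))‖ = 1 := by simp
      refine ⟨⟨?_, (hc r hr.1 _).2 hu⟩, ?_⟩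
      · simp [norm_smul, hn, abs_of_pos hr.1, hr.2]
      · intro h0
        have : r • (u : EuclideanSpace ℝ (Fin 3)) = 0 := h0
        have h2 := congrArg norm this
        simp [norm_smul, hn, hr.1.ne'] at h2
    · rintro ⟨⟨hb, hvA⟩, h0⟩
      have h0' : v ≠ 0 := h0
      have hpos : 0 < ‖v‖ := norm_pos_iff.2 h0'
      refine ⟨‖v‖, ⟨hpos, by simpa using hb⟩, ‖v‖⁻¹ • v, ⟨⟨‖v‖⁻¹ • v, ?_⟩, ?_, rfl⟩, ?_⟩
      · simp [norm_smul, hpos.ne']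
      · exact (hc _ (inv_pos.2 hpos) _).2 hvA
      · simp [smul_smul, hpos.ne']
  rw [h1, measure_sdiff_null (measure_singleton _)]
  simp

/-- The radial constant. -/
def croftonC : ℝ≥0∞ :=
  ∫⁻ z : ℝ, ∫⁻ r in Ioi (0 : ℝ), ENNReal.ofReal r * (if z ^ 2 + r ^ 2 < 1 then 1 else 0)

lemma polar_part (z : ℝ) (G : Set (ℝ × ℝ)) (hG : MeasurableSet G)
    (hc : ∀ r : ℝ, 0 < r → ∀ v, r • v ∈ G ↔ v ∈ G) :
    volume {p : ℝ × ℝ | z ^ 2 + (p.1 ^ 2 + p.2 ^ 2) < 1 ∧ p ∈ G} =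
      (∫⁻ r in Ioi (0 : ℝ), ENNReal.ofReal r * (if z ^ 2 + r ^ 2 < 1 then 1 else 0)) *
        volume {φ : ℝ | φ ∈ Ioo (-Real.pi) Real.pi ∧ (Real.cos φ, Real.sin φ) ∈ G} := by
  classical
  have hS : MeasurableSet {p : ℝ × ℝ | z ^ 2 + (p.1 ^ 2 + p.2 ^ 2) < 1 ∧ p ∈ G} :=
    MeasurableSet.inter (s₁ := {p : ℝ × ℝ | z ^ 2 + (p.1 ^ 2 + p.2 ^ 2) < 1})
      (measurableSet_lt (by fun_prop) (by fun_prop)) hG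
  have hF : MeasurableSet {φ : ℝ | (Real.cos φ, Real.sin φ) ∈ G} := by
    have : Measurable fun φ : ℝ => (Real.cos φ, Real.sin φ) := by fun_prop
    exact this hG
  have e : {φ : ℝ | φ ∈ Ioo (-Real.pi) Real.pi ∧ (Real.cos φ, Real.sin φ) ∈ G} =
    {φ : ℝ | (Real.cos φ, Real.sin φ) ∈ G} ∩ Ioo (-Real.pi) Real.pi := by
    ext; exact and_comm
  rw [e, ← Measure.restrict_apply hF, ← lintegral_indicator_one hF, ← lintegral_indicator_one hS,
    ← lintegral_comp_polarCoord_symm, polarCoord_target, Measure.volume_eq_prod,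
    ← Measure.prod_restrict, ← lintegral_prod_mul]
  · rw [Measure.prod_restrict]
    apply setLIntegral_congr_fun (measurableSet_Ioi.prod measurableSet_Ioo)
    rintro ⟨r, φ⟩ ⟨hr, hφ⟩
    have hr' : 0 < r := hr
    have h1 : (r * Real.cos φ, r * Real.sin φ) ∈ G ↔ (Real.cos φ, Real.sin φ) ∈ G := by
      have := hc r hr' (Real.cos φ, Real.sin φ)
      simpa using this
    have h2 : (r * Real.cos φ) ^ 2 + (r * Real.sin φ) ^ 2 = r ^ 2 := by
      have := Real.sin_sq_add_cos_sq φ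
      linear_combination r ^ 2 * this
    simp only [polarCoord_symm_apply, indicator_apply, mem_ofPred_eq, h1, h2, smul_eq_mul, mul_assoc,
      Pi.one_apply]
    by_cases ha : z ^ 2 + r ^ 2 < 1 <;> by_cases hb : (Real.cos φ, Real.sin φ) ∈ G <;>
      simp [ha, hb]
  · apply Measurable.aemeasurable
    apply Measurable.mul (by fun_prop)
    exact Measurable.ite (measurableSet_lt (by fun_prop) (by fun_prop)) (by fun_prop) (by fun_prop)
  · exact (measurable_one.indicator hF).aemeasurable

lemma vol_cone (G : Set (ℝ × ℝ)) (hG : MeasurableSet G)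
    (hc : ∀ r : ℝ, 0 < r → ∀ v, r • v ∈ G ↔ v ∈ G) :
    volume (ball 0 1 ∩ {w : EuclideanSpace ℝ (Fin 3) | (w 0, w 1) ∈ G}) =
      croftonC * volume {φ : ℝ | φ ∈ Ioo (-Real.pi) Real.pi ∧ (Real.cos φ, Real.sin φ) ∈ G} := by
  have hm : MeasurableSet {w : EuclideanSpace ℝ (Fin 3) | (w 0, w 1) ∈ G} := by
    have : Measurable fun w : EuclideanSpace ℝ (Fin 3) => (w 0, w 1) := by fun_prop
    exact this hG
  have hS : MeasurableSet {q : ℝ × (ℝ × ℝ) | q.1 ^ 2 + (q.2.1 ^ 2 + q.2.2 ^ 2) < 1 ∧ q.2 ∈ G} :=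
    MeasurableSet.inter (s₁ := {q : ℝ × (ℝ × ℝ) | q.1 ^ 2 + (q.2.1 ^ 2 + q.2.2 ^ 2) < 1})
      (measurableSet_lt (by fun_prop) (by fun_prop)) (measurable_snd hG)
  have mp := ((MeasurePreserving.id (volume : Measure ℝ)).prod
    (volume_preserving_finTwoArrow ℝ)).comp
    ((volume_preserving_piFinSuccAbove (fun _ : Fin 3 => ℝ) 2).comp
      (PiLp.volume_preserving_ofLp (Fin 3)))
  have := mp.measure_preimage hS.nullMeasurableSet
  have e : ball 0 1 ∩ {w : EuclideanSpace ℝ (Fin 3) | (w 0, w 1) ∈ G} =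
    ((Prod.map id (MeasurableEquiv.finTwoArrow (α := ℝ)) ∘
      (MeasurableEquiv.piFinSuccAbove (fun _ : Fin 3 => ℝ) 2) ∘ WithLp.ofLp) ⁻¹'
      {q : ℝ × (ℝ × ℝ) | q.1 ^ 2 + (q.2.1 ^ 2 + q.2.2 ^ 2) < 1 ∧ q.2 ∈ G}) := by
    ext w
    simp [EuclideanSpace.norm_eq, Fin.sum_univ_three, Fin.removeNth, Fin.succAbove, Real.sqrt_lt']
    intro _
    constructor <;> intro h <;> linarith
  rw [e]
  refine this.trans ?_
  rw [Measure.prod_apply hS, croftonC, ← lintegral_mul_const']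
  · apply lintegral_congr
    intro z
    exact polar_part z G hG hc
  · refine ((measure_mono (t := Ioo (-Real.pi) Real.pi) fun x hx => hx.1).trans_lt ?_).ne
    simp

lemma exists_frame (x y : EuclideanSpace ℝ (Fin 3)) (hx : ‖x‖ = 1) (hy : ‖y‖ = 1) :
    ∃ b : OrthonormalBasis (Fin 3) ℝ (EuclideanSpace ℝ (Fin 3)), b 1 = x ∧
      y = Real.cos (InnerProductGeometry.angle x y) • b 1 -
        Real.sin (InnerProductGeometry.angle x y) • b 0 := by
  set θ := InnerProductGeometry.angle x y with hθ
  have hc : ⟪x, y⟫ = Real.cos θ := by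
    rw [hθ, InnerProductGeometry.cos_angle, hx, hy]; simp
  have hxx : ⟪x, x⟫ = 1 := by rw [real_inner_self_eq_norm_sq, hx]; norm_num
  have hyy : ⟪y, y⟫ = 1 := by rw [real_inner_self_eq_norm_sq, hy]; norm_num
  have key : ∃ w : EuclideanSpace ℝ (Fin 3), ‖w‖ = 1 ∧ ⟪x, w⟫ = 0 ∧
      y = Real.cos θ • x - Real.sin θ • w := by
    have hsin : Real.sin θ ^ 2 = 1 - Real.cos θ ^ 2 := Real.sin_sq θ
    have hz : ‖Real.cos θ • x - y‖ ^ 2 = Real.sin θ ^ 2 := by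
      rw [← real_inner_self_eq_norm_sq, inner_sub_left, inner_sub_right, inner_sub_right,
        real_inner_smul_left, real_inner_smul_right, real_inner_smul_left, real_inner_smul_right,
        real_inner_comm x y, hc, hxx, hyy]
      linarith
    by_cases hs : Real.sin θ = 0
    · have h0 : Real.cos θ • x - y = 0 := by
        rw [hs] at hz
        simpa using hz
      have ho : Orthonormal ℝ (({0} : Set (Fin 3)).domRestrict (fun _ => x)) := by
        constructor
        · intro i; simpa using hx
        · intro i j hij
          exact absurd (Subsingleton.elim i j) hij
      obtain ⟨b, hb⟩ := ho.exists_orthonormalBasis_extension_of_card_eq (by simp)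
      refine ⟨b 1, b.norm_eq_one 1, ?_, ?_⟩
      · rw [← hb 0 (by simp)]
        exact b.inner_eq_zero (by decide)
      · rw [hs, zero_smul, sub_zero]; exact (sub_eq_zero.1 h0).symm
    · refine ⟨(Real.sin θ)⁻¹ • (Real.cos θ • x - y), ?_, ?_, ?_⟩
      · rw [norm_smul]
        have h1 : ‖Real.cos θ • x - y‖ = |Real.sin θ| := by
          rw [← sq_eq_sq₀ (norm_nonneg _) (abs_nonneg _), hz, sq_abs]
        rw [h1, norm_inv, Real.norm_eq_abs, inv_mul_cancel₀ (abs_ne_zero.2 hs)]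
      · rw [real_inner_smul_right, inner_sub_right, real_inner_smul_right, hxx, hc]; ring
      · rw [smul_smul, mul_inv_cancel₀ hs, one_smul]; abel
  obtain ⟨w, hw, hxw, hyw⟩ := key
  have ho : Orthonormal ℝ (({0, 1} : Set (Fin 3)).domRestrict (![w, x, 0] : Fin 3 → _)) := by
    constructor
    · rintro ⟨i, rfl | rfl⟩
      · simpa using hw
      · simpa using hx
    · rintro ⟨i, rfl | rfl⟩ ⟨j, rfl | rfl⟩ hij
      · exact absurd rfl hij
      · simpa [real_inner_comm] using hxw
      · simpa using hxw
      · exact absurd rfl hij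
  obtain ⟨b, hb⟩ := ho.exists_orthonormalBasis_extension_of_card_eq (by simp)
  have h0 : b 0 = w := by simpa using hb 0 (by simp)
  have h1 : b 1 = x := by simpa using hb 1 (by simp)
  exact ⟨b, h1, by rw [h0, h1]; exact hyw⟩

lemma angular_set (θ : ℝ) (h0 : 0 ≤ θ) (hπ : θ ≤ Real.pi) :
    volume {φ : ℝ | φ ∈ Ioo (-Real.pi) Real.pi ∧ (Real.cos φ, Real.sin φ) ∈
      {p : ℝ × ℝ | p.2 * (Real.cos θ * p.2 - Real.sin θ * p.1) < 0}} =
      2 * ENNReal.ofReal θ := by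
  have e : {φ : ℝ | φ ∈ Ioo (-Real.pi) Real.pi ∧ (Real.cos φ, Real.sin φ) ∈
      {p : ℝ × ℝ | p.2 * (Real.cos θ * p.2 - Real.sin θ * p.1) < 0}} =
      Ioo 0 θ ∪ Ioo (-Real.pi) (θ - Real.pi) := by
    ext φ
    have hs : Real.cos θ * Real.sin φ - Real.sin θ * Real.cos φ = Real.sin (φ - θ) := by
      rw [Real.sin_sub]; ring
    simp only [mem_ofPred_eq, hs, mem_union, mem_Ioo]
    constructor
    · rintro ⟨⟨h1, h2⟩, h3⟩
      rcases lt_trichotomy φ 0 with h | h | h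
      · right
        refine ⟨h1, ?_⟩
        by_contra hcon
        have a := Real.sin_neg_of_neg_of_neg_pi_lt h h1
        have b : Real.sin (φ - θ) ≤ 0 :=
          Real.sin_nonpos_of_nonpos_of_neg_pi_le (by linarith) (by linarith)
        nlinarith
      · subst h; simp at h3
      · left
        refine ⟨h, ?_⟩
        by_contra hcon
        have a := Real.sin_pos_of_pos_of_lt_pi h h2
        have b : 0 ≤ Real.sin (φ - θ) :=
          Real.sin_nonneg_of_nonneg_of_le_pi (by linarith) (by linarith)
        nlinarith
    · rintro (⟨h1, h2⟩ | ⟨h1, h2⟩)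
      · refine ⟨⟨by linarith, by linarith⟩, ?_⟩
        have a := Real.sin_pos_of_pos_of_lt_pi h1 (by linarith)
        have b := Real.sin_neg_of_neg_of_neg_pi_lt (x := φ - θ) (by linarith) (by linarith)
        nlinarith
      · refine ⟨⟨by linarith, by linarith⟩, ?_⟩
        have a := Real.sin_neg_of_neg_of_neg_pi_lt (x := φ) (by linarith) (by linarith)
        have b := Real.sin_pos_of_pos_of_lt_pi (x := φ - θ + 2 * Real.pi)
          (by linarith) (by linarith)
        rw [Real.sin_add_two_pi] at b
        nlinarith
  rw [e, measure_union _ measurableSet_Ioo]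
  · simp [Real.volume_Ioo, two_mul]
  · rw [Set.disjoint_left]
    rintro a ⟨h1, h2⟩ ⟨h3, h4⟩
    linarith

/-- Measure of the set of great circles separating two points. -/
lemma sep_measure (x y : EuclideanSpace ℝ (Fin 3)) (hx : ‖x‖ = 1) (hy : ‖y‖ = 1) :
    ENNReal.ofReal Real.pi * (volume : Measure (EuclideanSpace ℝ (Fin 3))).toSphere
      {u : sphere (0 : EuclideanSpace ℝ (Fin 3)) 1 |
        ⟪x, (u : EuclideanSpace ℝ (Fin 3))⟫ * ⟪y, (u : EuclideanSpace ℝ (Fin 3))⟫ < 0} =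
      ENNReal.ofReal (InnerProductGeometry.angle x y) *
        (volume : Measure (EuclideanSpace ℝ (Fin 3))).toSphere univ := by
  obtain ⟨b, hb1, hby⟩ := exists_frame x y hx hy
  set θ := InnerProductGeometry.angle x y with hθ
  have hA := toSphere_cone {v : EuclideanSpace ℝ (Fin 3) | ⟪x, v⟫ * ⟪y, v⟫ < 0}
    (measurableSet_lt (by fun_prop) (by fun_prop)) (by
      intro r hr v
      simp only [mem_ofPred_eq, real_inner_smul_right]
      rw [show r * ⟪x, v⟫ * (r * ⟪y, v⟫) = (r * r) * (⟪x, v⟫ * ⟪y, v⟫) by ring]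
      exact ⟨fun h => by
          by_contra hcon
          have := mul_nonneg (mul_pos hr hr).le (not_lt.1 hcon)
          linarith, fun h => mul_neg_of_pos_of_neg (mul_pos hr hr) h⟩)
  simp only [mem_ofPred_eq] at hA
  have hU := toSphere_cone univ MeasurableSet.univ (by simp)
  have hG : MeasurableSet {p : ℝ × ℝ | p.2 * (Real.cos θ * p.2 - Real.sin θ * p.1) < 0} :=
    measurableSet_lt (by fun_prop) (by fun_prop)
  have hv := vol_cone {p : ℝ × ℝ | p.2 * (Real.cos θ * p.2 - Real.sin θ * p.1) < 0} hG (by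
    intro r hr v
    simp only [mem_ofPred_eq, Prod.smul_fst, Prod.smul_snd, smul_eq_mul]
    rw [show r * v.2 * (Real.cos θ * (r * v.2) - Real.sin θ * (r * v.1)) =
      (r * r) * (v.2 * (Real.cos θ * v.2 - Real.sin θ * v.1)) by ring]
    exact ⟨fun h => by
          by_contra hcon
          have := mul_nonneg (mul_pos hr hr).le (not_lt.1 hcon)
          linarith, fun h => mul_neg_of_pos_of_neg (mul_pos hr hr) h⟩)
  have hvU := vol_cone univ MeasurableSet.univ (by simp)
  rw [angular_set θ (InnerProductGeometry.angle_nonneg _ _) (InnerProductGeometry.angle_le_pi _ _)]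
    at hv
  have hvol : volume (ball 0 1 ∩ {v : EuclideanSpace ℝ (Fin 3) | ⟪x, v⟫ * ⟪y, v⟫ < 0}) =
      volume (ball 0 1 ∩ {w : EuclideanSpace ℝ (Fin 3) | (w 0, w 1) ∈
        {p : ℝ × ℝ | p.2 * (Real.cos θ * p.2 - Real.sin θ * p.1) < 0}}) := by
    have hm : MeasurableSet {w : EuclideanSpace ℝ (Fin 3) | (w 0, w 1) ∈
        {p : ℝ × ℝ | p.2 * (Real.cos θ * p.2 - Real.sin θ * p.1) < 0}} := by
      have : Measurable fun w : EuclideanSpace ℝ (Fin 3) => (w 0, w 1) := by fun_prop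
      exact this hG
    rw [← b.measurePreserving_repr.measure_preimage (measurableSet_ball.inter hm).nullMeasurableSet]
    congr 1
    ext v
    have h1 : ⟪x, v⟫ = b.repr v 1 := by rw [b.repr_apply_apply, hb1]
    have h2 : ⟪y, v⟫ = Real.cos θ * b.repr v 1 - Real.sin θ * b.repr v 0 := by
      rw [b.repr_apply_apply, b.repr_apply_apply, hby, inner_sub_left, real_inner_smul_left,
        real_inner_smul_left]
    simp only [mem_inter_iff, mem_preimage, mem_ofPred_eq, h1, h2, mem_ball_zero_iff,
      LinearIsometryEquiv.norm_map]
  simp only [mem_univ, ofPred_true, inter_univ, and_true] at hU hvU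
  rw [hA, hU, hvol, hv, hvU, show {φ : ℝ | φ ∈ Ioo (-Real.pi) Real.pi} = Ioo (-Real.pi) Real.pi
    from rfl, Real.volume_Ioo, show Real.pi - -Real.pi = 2 * Real.pi by ring,
    ENNReal.ofReal_mul (by norm_num)]
  simp only [ENNReal.ofReal_ofNat]
  ring

lemma chord_sq (x y : EuclideanSpace ℝ (Fin 3)) (hx : ‖x‖ = 1) (hy : ‖y‖ = 1) :
    dist x y = 2 * Real.sin (InnerProductGeometry.angle x y / 2) := by
  set θ := InnerProductGeometry.angle x y with hθ
  have h0 : 0 ≤ θ := InnerProductGeometry.angle_nonneg _ _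
  have hπ : θ ≤ Real.pi := InnerProductGeometry.angle_le_pi _ _
  have hc : ⟪x, y⟫ = Real.cos θ := by
    rw [hθ, InnerProductGeometry.cos_angle, hx, hy]; simp
  have hs : 0 ≤ Real.sin (θ / 2) :=
    Real.sin_nonneg_of_nonneg_of_le_pi (by linarith) (by linarith)
  rw [← sq_eq_sq₀ dist_nonneg (by linarith), dist_eq_norm, norm_sub_sq_real, hx, hy, hc,
    show Real.cos θ = 1 - 2 * Real.sin (θ / 2) ^ 2 by
      have h := Real.cos_two_mul (θ / 2)
      rw [show 2 * (θ / 2) = θ by ring] at h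
      rw [Real.sin_sq, h]; ring]
  ring

lemma chord_le_angle (x y : EuclideanSpace ℝ (Fin 3)) (hx : ‖x‖ = 1) (hy : ‖y‖ = 1) :
    dist x y ≤ InnerProductGeometry.angle x y := by
  rw [chord_sq x y hx hy]
  have h0 := InnerProductGeometry.angle_nonneg x y
  have := Real.sin_le (x := InnerProductGeometry.angle x y / 2) (by linarith)
  linarith

lemma angle_le_chord (x y : EuclideanSpace ℝ (Fin 3)) (hx : ‖x‖ = 1) (hy : ‖y‖ = 1)
    (δ : ℝ) (hδ : dist x y ≤ δ) :
    (1 - δ ^ 2) * InnerProductGeometry.angle x y ≤ dist x y := by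
  have hch := chord_sq x y hx hy
  set θ := InnerProductGeometry.angle x y with hθ
  have h0 : 0 ≤ θ := InnerProductGeometry.angle_nonneg _ _
  have hπ : θ ≤ Real.pi := InnerProductGeometry.angle_le_pi _ _
  have hj := Real.mul_le_sin (x := θ / 2) (by linarith) (by linarith)
  have h4 : θ / 4 ≤ Real.sin (θ / 2) := by
    refine le_trans ?_ hj
    have : 1 / 2 ≤ 2 / Real.pi := by
      rw [div_le_div_iff₀ (by norm_num) Real.pi_pos]
      linarith [Real.pi_le_four]
    nlinarith
  have h2 : θ ≤ 2 * dist x y := by linarith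
  rcases h0.eq_or_lt with h | h
  · rw [← h]; simp
  · have h6 := Real.sin_gt_sub_cube (x := θ / 2) (by linarith)
    have h7 : θ ^ 2 ≤ 4 * δ ^ 2 := by nlinarith [dist_nonneg (x := x) (y := y)]
    have h8 : θ ^ 3 ≤ 4 * δ ^ 2 * θ := by
      have := mul_le_mul_of_nonneg_right h7 h0
      calc θ ^ 3 = θ ^ 2 * θ := by ring
        _ ≤ _ := this
    have : 0 ≤ δ ^ 2 * θ := by positivity
    nlinarith

/-- The number of sign changes along a partition. -/
def signCount (γ : ℝ → EuclideanSpace ℝ (Fin 3)) (p : ℕ → ℝ) (n : ℕ)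
    (u : sphere (0 : EuclideanSpace ℝ (Fin 3)) 1) : ℝ≥0∞ :=
  ∑ i ∈ Finset.range n, {u : sphere (0 : EuclideanSpace ℝ (Fin 3)) 1 |
        ⟪γ (p i), (u : EuclideanSpace ℝ (Fin 3))⟫ *
          ⟪γ (p (i + 1)), (u : EuclideanSpace ℝ (Fin 3))⟫ < 0}.indicator 1 u

open Classical in
lemma signCount_eq (γ : ℝ → EuclideanSpace ℝ (Fin 3)) (p : ℕ → ℝ) (n : ℕ)
    (u : sphere (0 : EuclideanSpace ℝ (Fin 3)) 1) :
    signCount γ p n u = (((Finset.range n).filter fun i =>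
      ⟪γ (p i), (u : EuclideanSpace ℝ (Fin 3))⟫ *
          ⟪γ (p (i + 1)), (u : EuclideanSpace ℝ (Fin 3))⟫ < 0).card : ℝ≥0∞) := by
  simp [signCount, indicator_apply, Finset.sum_boole]

lemma measurableSet_sep (x y : EuclideanSpace ℝ (Fin 3)) :
    MeasurableSet {u : sphere (0 : EuclideanSpace ℝ (Fin 3)) 1 |
        ⟪x, (u : EuclideanSpace ℝ (Fin 3))⟫ * ⟪y, (u : EuclideanSpace ℝ (Fin 3))⟫ < 0} :=
  measurableSet_lt (by fun_prop) (by fun_prop)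

lemma measurable_signCount (γ : ℝ → EuclideanSpace ℝ (Fin 3)) (p : ℕ → ℝ) (n : ℕ) :
    Measurable (signCount γ p n) := by
  unfold signCount
  exact Finset.measurable_fun_sum _ fun i _ => measurable_one.indicator (measurableSet_sep _ _)

lemma lintegral_signCount (γ : ℝ → EuclideanSpace ℝ (Fin 3)) (hs : ∀ t, ‖γ t‖ = 1)
    (p : ℕ → ℝ) (n : ℕ) :
    ENNReal.ofReal Real.pi * ∫⁻ u, signCount γ p n u
        ∂(volume : Measure (EuclideanSpace ℝ (Fin 3))).toSphere =
      (∑ i ∈ Finset.range n,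
        ENNReal.ofReal (InnerProductGeometry.angle (γ (p i)) (γ (p (i + 1))))) *
        (volume : Measure (EuclideanSpace ℝ (Fin 3))).toSphere univ := by
  unfold signCount
  rw [lintegral_finsetSum _ fun i _ => measurable_one.indicator (measurableSet_sep _ _),
    Finset.mul_sum, Finset.sum_mul]
  refine Finset.sum_congr rfl fun i _ => ?_
  rw [lintegral_indicator_one (measurableSet_sep _ _), sep_measure _ _ (hs _) (hs _)]

lemma signCount_le (γ : ℝ → EuclideanSpace ℝ (Fin 3)) (hγ : Continuous γ) (p : ℕ → ℝ)
    (hp : Monotone p) (hp' : ∀ i, p i ∈ Icc (0 : ℝ) 1) (n : ℕ)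
    (u : sphere (0 : EuclideanSpace ℝ (Fin 3)) 1) :
    signCount γ p n u ≤
      (({t ∈ Ico (0 : ℝ) 1 | ⟪γ t, (u : EuclideanSpace ℝ (Fin 3))⟫ = 0}).encard : ℝ≥0∞) := by
  classical
  rw [signCount_eq]
  set F := (Finset.range n).filter fun i =>
      ⟪γ (p i), (u : EuclideanSpace ℝ (Fin 3))⟫ *
          ⟪γ (p (i + 1)), (u : EuclideanSpace ℝ (Fin 3))⟫ < 0 with hF
  have hcont : Continuous fun t => ⟪γ t, (u : EuclideanSpace ℝ (Fin 3))⟫ := by fun_prop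
  have hz : ∀ i, ∃ z, i ∈ F → z ∈ Ioo (p i) (p (i + 1)) ∧
      ⟪γ z, (u : EuclideanSpace ℝ (Fin 3))⟫ = 0 := by
    intro i
    by_cases hi : i ∈ F
    · have hneg := (Finset.mem_filter.1 hi).2
      have hle : p i ≤ p (i + 1) := hp (Nat.le_succ i)
      rcases mul_neg_iff.1 hneg with ⟨h1, h2⟩ | ⟨h1, h2⟩
      · obtain ⟨z, hz, hz'⟩ := intermediate_value_Ioo' hle hcont.continuousOn ⟨h2, h1⟩
        exact ⟨z, fun _ => ⟨hz, hz'⟩⟩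
      · obtain ⟨z, hz, hz'⟩ := intermediate_value_Ioo hle hcont.continuousOn ⟨h1, h2⟩
        exact ⟨z, fun _ => ⟨hz, hz'⟩⟩
    · exact ⟨0, fun h => absurd h hi⟩
  choose z hz using hz
  have hmono : ∀ i ∈ F, ∀ j ∈ F, i < j → z i < z j := fun i hi j hj hij =>
    ((hz i hi).1.2.trans_le (hp hij)).trans (hz j hj).1.1
  have hinj : InjOn z F := by
    intro i hi j hj hij
    rcases lt_trichotomy i j with h | h | h
    · exact absurd hij (hmono i hi j hj h).ne
    · exact h
    · exact absurd hij (hmono j hj i hi h).ne'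
  have hsub : z '' F ⊆ {t ∈ Ico (0 : ℝ) 1 | ⟪γ t, (u : EuclideanSpace ℝ (Fin 3))⟫ = 0} := by
    rintro _ ⟨i, hi, rfl⟩
    have h := hz i hi
    exact ⟨⟨(hp' i).1.trans h.1.1.le, h.1.2.trans_le (hp' (i + 1)).2⟩, h.2⟩
  have := encard_le_encard hsub
  rw [hinj.encard_image, encard_coe_eq_coe_finsetCard] at this
  have h2 := ENat.toENNReal_le.2 this
  simpa using h2

lemma crofton_lower (γ : ℝ → EuclideanSpace ℝ (Fin 3)) (hγ : Continuous γ)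
    (hs : ∀ t, ‖γ t‖ = 1) :
    eVariationOn γ (Icc (0 : ℝ) 1) *
        (volume : Measure (EuclideanSpace ℝ (Fin 3))).toSphere univ ≤
      ENNReal.ofReal Real.pi *
        ∫⁻ u : sphere (0 : EuclideanSpace ℝ (Fin 3)) 1,
          (({t ∈ Ico (0 : ℝ) 1 | ⟪γ t, (u : EuclideanSpace ℝ (Fin 3))⟫ = 0}).encard :
            ℝ≥0∞)
          ∂(volume : Measure (EuclideanSpace ℝ (Fin 3))).toSphere := by
  unfold eVariationOn
  rw [ENNReal.iSup_mul]
  refine iSup_le ?_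
  rintro ⟨n, p, hp, hp'⟩
  calc _ ≤ (∑ i ∈ Finset.range n,
        ENNReal.ofReal (InnerProductGeometry.angle (γ (p i)) (γ (p (i + 1))))) *
        (volume : Measure (EuclideanSpace ℝ (Fin 3))).toSphere univ := by
        gcongr with i hi
        rw [edist_comm, edist_dist]
        exact ENNReal.ofReal_le_ofReal (chord_le_angle _ _ (hs _) (hs _))
    _ = _ := (lintegral_signCount γ hs p n).symm
    _ ≤ _ := by
        gcongr with u
        exact signCount_le γ hγ p hp hp' n u

/-- Dual cone of a set. -/
def dualC (S : Set (EuclideanSpace ℝ (Fin 3))) : Set (EuclideanSpace ℝ (Fin 3)) :=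
  {v | ∀ x ∈ S, 0 ≤ ⟪x, v⟫}

lemma dualC_smul (S : Set (EuclideanSpace ℝ (Fin 3))) (r : ℝ) (hr : 0 < r)
    (v : EuclideanSpace ℝ (Fin 3)) : r • v ∈ dualC S ↔ v ∈ dualC S := by
  simp only [dualC, mem_ofPred_eq, real_inner_smul_right]
  exact forall₂_congr fun x _ => mul_nonneg_iff_of_pos_left hr

lemma convex_dualC (S : Set (EuclideanSpace ℝ (Fin 3))) : Convex ℝ (dualC S) := by
  intro v hv w hw a b ha hb _ x hx
  rw [inner_add_right, real_inner_smul_right, real_inner_smul_right]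
  exact add_nonneg (mul_nonneg ha (hv x hx)) (mul_nonneg hb (hw x hx))

lemma frontier_null (S : Set (EuclideanSpace ℝ (Fin 3))) :
    (volume : Measure (EuclideanSpace ℝ (Fin 3))).toSphere
      {u : sphere (0 : EuclideanSpace ℝ (Fin 3)) 1 |
        (u : EuclideanSpace ℝ (Fin 3)) ∈ frontier (dualC S)} = 0 := by
  rw [toSphere_cone _ isClosed_frontier.measurableSet]
  · rw [measure_mono_null inter_subset_right ((convex_dualC S).addHaar_frontier volume), mul_zero]
  · intro r hr v
    have h := (Homeomorph.smulOfNeZero (α := EuclideanSpace ℝ (Fin 3)) r hr.ne').preimage_frontier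
      (dualC S)
    have h2 : (Homeomorph.smulOfNeZero (α := EuclideanSpace ℝ (Fin 3)) r hr.ne') ⁻¹' (dualC S)
      = dualC S := by
      ext w; exact dualC_smul S r hr w
    rw [h2] at h
    have := Set.ext_iff.1 h v
    exact this

lemma mem_frontier_dualC (S : Set (EuclideanSpace ℝ (Fin 3))) (u x : EuclideanSpace ℝ (Fin 3))
    (hu : u ∈ dualC S) (hx : x ∈ S) (hx0 : ‖x‖ = 1) (h0 : ⟪x, u⟫ = 0) :
    u ∈ frontier (dualC S) := by
  refine ⟨subset_closure hu, fun hint => ?_⟩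
  have ht : Filter.Tendsto (fun ε : ℝ => u - ε • x) (nhdsWithin 0 (Ioi 0)) (nhds u) := by
    have : Continuous fun ε : ℝ => u - ε • x := by fun_prop
    have h := this.tendsto 0
    simp only [zero_smul, sub_zero] at h
    exact h.mono_left nhdsWithin_le_nhds
  have h1 := ht.eventually (mem_interior_iff_mem_nhds.1 hint)
  obtain ⟨ε, hε, hpos⟩ := (h1.and self_mem_nhdsWithin).exists
  have h2 := hε x hx
  rw [inner_sub_right, real_inner_smul_right, h0, real_inner_self_eq_norm_sq, hx0] at h2
  have h3 : (0 : ℝ) < ε := hpos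
  linarith

/-- Generic great circles cross the curve at every intersection. -/
lemma generic (γ : ℝ → EuclideanSpace ℝ (Fin 3)) (hs : ∀ t, ‖γ t‖ = 1) :
    ∀ᵐ u : sphere (0 : EuclideanSpace ℝ (Fin 3)) 1
      ∂(volume : Measure (EuclideanSpace ℝ (Fin 3))).toSphere,
      ∀ a b : ℚ, ∀ t ∈ Icc (a : ℝ) b, ⟪γ t, (u : EuclideanSpace ℝ (Fin 3))⟫ = 0 →
        (∃ s ∈ Icc (a : ℝ) b, ⟪γ s, (u : EuclideanSpace ℝ (Fin 3))⟫ < 0) ∧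
        (∃ s ∈ Icc (a : ℝ) b, 0 < ⟪γ s, (u : EuclideanSpace ℝ (Fin 3))⟫) := by
  rw [ae_all_iff]; intro a
  rw [ae_all_iff]; intro b
  have h1 : ∀ᵐ u : sphere (0 : EuclideanSpace ℝ (Fin 3)) 1
      ∂(volume : Measure (EuclideanSpace ℝ (Fin 3))).toSphere,
      (u : EuclideanSpace ℝ (Fin 3)) ∉ frontier (dualC (γ '' Icc (a : ℝ) b)) := by
    rw [ae_iff]; simpa using frontier_null (γ '' Icc (a : ℝ) b)
  have h2 : ∀ᵐ u : sphere (0 : EuclideanSpace ℝ (Fin 3)) 1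
      ∂(volume : Measure (EuclideanSpace ℝ (Fin 3))).toSphere,
      (u : EuclideanSpace ℝ (Fin 3)) ∉ frontier (dualC ((fun t => - γ t) '' Icc (a : ℝ) b)) := by
    rw [ae_iff]; simpa using frontier_null ((fun t => - γ t) '' Icc (a : ℝ) b)
  filter_upwards [h1, h2] with u hu1 hu2 t ht h0
  constructor
  · by_contra! hcon
    refine hu1 (mem_frontier_dualC _ _ (γ t) ?_ ⟨t, ht, rfl⟩ (hs t) h0)
    rintro _ ⟨s, hs', rfl⟩
    exact hcon s hs'
  · by_contra! hcon
    refine hu2 (mem_frontier_dualC _ _ (- γ t) ?_ ⟨t, ht, rfl⟩ (by rw [norm_neg, hs t]) ?_)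
    · rintro _ ⟨s, hs', rfl⟩
      have := hcon s hs'
      simp only [inner_neg_left]
      linarith
    · rw [inner_neg_left, h0, neg_zero]

lemma discrete_change (g : ℕ → ℝ) (hg : ∀ i, g i ≠ 0) (i j : ℕ) (hij : i ≤ j)
    (h : g i * g j < 0) : ∃ l, i ≤ l ∧ l < j ∧ g l * g (l + 1) < 0 := by
  induction j, hij using Nat.le_induction with
  | base => nlinarith [mul_self_nonneg (g i)]
  | succ j hij ih =>
    by_cases hj : g i * g j < 0
    · obtain ⟨l, h1, h2, h3⟩ := ih hj
      exact ⟨l, h1, by omega, h3⟩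
    · refine ⟨j, hij, by omega, ?_⟩
      have hpos : 0 < g i * g j :=
        lt_of_le_of_ne (not_lt.1 hj) (mul_ne_zero (hg i) (hg j)).symm
      have h4 : (g i * g i) * (g j * g (j + 1)) < 0 := by
        have := mul_neg_of_pos_of_neg hpos h
        linarith
      have h5 : 0 < g i * g i := mul_self_pos.2 (hg i)
      by_contra hcon
      have := mul_nonneg h5.le (not_lt.1 hcon)
      linarith

lemma sign_change (f : ℝ → ℝ) (hf : Continuous f) (hq : ∀ q : ℚ, f q ≠ 0) (α β r s : ℝ)
    (hα : 0 ≤ α) (hr : r ∈ Ioo α β) (hs : s ∈ Ioo α β) (hfr : 0 < f r) (hfs : f s < 0) :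
    ∀ᶠ N : ℕ in Filter.atTop, ∃ l : ℕ, (l : ℝ) / (N + 1 : ℕ) ∈ Ioo α β ∧
      f ((l : ℝ) / (N + 1 : ℕ)) * f (((l + 1 : ℕ) : ℝ) / (N + 1 : ℕ)) < 0 := by
  have hcast : Filter.Tendsto (fun N : ℕ => ((N + 1 : ℕ) : ℝ)) Filter.atTop Filter.atTop :=
    tendsto_natCast_atTop_atTop.comp (Filter.tendsto_add_atTop_nat 1)
  have tr := (tendsto_nat_floor_mul_div_atTop (R := ℝ) (hα.trans hr.1.le)).comp hcast
  have ts := (tendsto_nat_floor_mul_div_atTop (R := ℝ) (hα.trans hs.1.le)).comp hcast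
  have er := tr.eventually ((isOpen_Ioo.mem_nhds hr))
  have es := ts.eventually ((isOpen_Ioo.mem_nhds hs))
  have er' := ((hf.tendsto r).comp tr).eventually (isOpen_Ioi.mem_nhds (show f r ∈ Ioi 0 from hfr))
  have es' := ((hf.tendsto s).comp ts).eventually (isOpen_Iio.mem_nhds (show f s ∈ Iio 0 from hfs))
  filter_upwards [er, es, er', es'] with N h1 h2 h3 h4
  simp only [Function.comp_apply] at h1 h2 h3 h4
  set i := ⌊r * ((N + 1 : ℕ) : ℝ)⌋₊
  set j := ⌊s * ((N + 1 : ℕ) : ℝ)⌋₊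
  have h3' : 0 < f ((i : ℝ) / (N + 1 : ℕ)) := h3
  have h4' : f ((j : ℝ) / (N + 1 : ℕ)) < 0 := h4
  have hg : ∀ l : ℕ, (fun l : ℕ => f ((l : ℝ) / (N + 1 : ℕ))) l ≠ 0 := by
    intro l
    have := hq ((l : ℚ) / (N + 1 : ℕ))
    push_cast at this ⊢
    exact this
  have mono : ∀ a b : ℕ, a ≤ b → (a : ℝ) / (N + 1 : ℕ) ≤ (b : ℝ) / (N + 1 : ℕ) := by
    intro a b hab
    gcongr
  rcases le_total i j with hij | hij
  · obtain ⟨l, a, b, c⟩ := discrete_change _ hg i j hij (mul_neg_of_pos_of_neg h3' h4')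
    exact ⟨l, ⟨h1.1.trans_le (mono _ _ a), (mono _ _ b.le).trans_lt h2.2⟩, c⟩
  · obtain ⟨l, a, b, c⟩ := discrete_change _ hg j i hij (mul_neg_of_neg_of_pos h4' h3')
    exact ⟨l, ⟨h2.1.trans_le (mono _ _ a), (mono _ _ b.le).trans_lt h1.2⟩, c⟩

/-- Uniform partition. -/
def unifP (N : ℕ) (i : ℕ) : ℝ := (i : ℝ) / (N + 1 : ℕ)

lemma finset_le_signCount (γ : ℝ → EuclideanSpace ℝ (Fin 3)) (hγ : Continuous γ)
    (u : sphere (0 : EuclideanSpace ℝ (Fin 3)) 1)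
    (hu : ∀ a b : ℚ, ∀ t ∈ Icc (a : ℝ) b, ⟪γ t, (u : EuclideanSpace ℝ (Fin 3))⟫ = 0 →
        (∃ s ∈ Icc (a : ℝ) b, ⟪γ s, (u : EuclideanSpace ℝ (Fin 3))⟫ < 0) ∧
        (∃ s ∈ Icc (a : ℝ) b, 0 < ⟪γ s, (u : EuclideanSpace ℝ (Fin 3))⟫))
    (F : Finset ℝ)
    (hF : (F : Set ℝ) ⊆ {t ∈ Ico (0 : ℝ) 1 | ⟪γ t, (u : EuclideanSpace ℝ (Fin 3))⟫ = 0}) :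
    ∀ᶠ N : ℕ in Filter.atTop, (F.card : ℝ≥0∞) ≤ signCount γ (unifP N) (N + 1) u := by
  classical
  have hcont : Continuous fun t => ⟪γ t, (u : EuclideanSpace ℝ (Fin 3))⟫ := by fun_prop
  have hq : ∀ q : ℚ, ⟪γ q, (u : EuclideanSpace ℝ (Fin 3))⟫ ≠ 0 := by
    intro q h0
    obtain ⟨s, hs, hneg⟩ := (hu q q q ⟨le_rfl, le_rfl⟩ h0).1
    rw [le_antisymm hs.2 hs.1] at hneg
    linarith
  obtain ⟨U, hU, hdisj⟩ := F.finite_toSet.t2_separation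
  have hev : ∀ t ∈ F, ∀ᶠ N : ℕ in Filter.atTop, ∃ l : ℕ, unifP N l ∈ U t ∩ Ioo 0 1 ∧
      ⟪γ (unifP N l), (u : EuclideanSpace ℝ (Fin 3))⟫ *
        ⟪γ (unifP N (l + 1)), (u : EuclideanSpace ℝ (Fin 3))⟫ < 0 := by
    intro t ht
    obtain ⟨⟨ht0, ht1⟩, htz⟩ := hF ht
    have ht0' : 0 < t := by
      rcases ht0.eq_or_lt with h | h
      · exfalso
        apply hq 0
        rw [← h] at htz
        simpa using htz
      · exact h
    have hopen : IsOpen (U t ∩ Ioo 0 1) := (hU t).2.inter isOpen_Ioo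
    obtain ⟨ε, hε, hball⟩ := Metric.isOpen_iff.1 hopen t ⟨(hU t).1, ht0', ht1⟩
    rw [Real.ball_eq_Ioo] at hball
    obtain ⟨a, ha1, ha2⟩ := exists_rat_btwn (show t - ε < t by linarith)
    obtain ⟨b, hb1, hb2⟩ := exists_rat_btwn (show t < t + ε by linarith)
    obtain ⟨⟨s, hs, hsn⟩, ⟨r, hr, hrp⟩⟩ := hu a b t ⟨ha2.le, hb1.le⟩ htz
    have hα : 0 ≤ t - ε := by
      by_contra! hcon
      have : (0 : ℝ) ∈ Ioo (t - ε) (t + ε) := ⟨hcon, by linarith⟩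
      exact lt_irrefl _ (hball this).2.1
    have := sign_change _ hcont hq (t - ε) (t + ε) r s hα
      ⟨ha1.trans_le hr.1, hr.2.trans_lt hb2⟩ ⟨ha1.trans_le hs.1, hs.2.trans_lt hb2⟩ hrp hsn
    filter_upwards [this] with N ⟨l, hl, hl'⟩
    exact ⟨l, hball hl, hl'⟩
  rw [← Filter.eventually_all_finset] at hev
  filter_upwards [hev] with N hN
  choose! l hl using hN
  rw [signCount_eq]
  have : F.card ≤ ((Finset.range (N + 1)).filter fun i =>
      ⟪γ (unifP N i), (u : EuclideanSpace ℝ (Fin 3))⟫ *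
          ⟪γ (unifP N (i + 1)), (u : EuclideanSpace ℝ (Fin 3))⟫ < 0).card := by
    apply Finset.card_le_card_of_injOn l
    · intro t ht
      obtain ⟨⟨_, hlt⟩, hneg⟩ := hl t ht
      have h1 := hlt.2
      unfold unifP at h1
      rw [div_lt_one (by positivity)] at h1
      simp only [Finset.coe_filter, Finset.mem_range, mem_ofPred_eq]
      exact ⟨by exact_mod_cast h1, hneg⟩
    · intro t ht t' ht' heq
      by_contra hne
      have h1 := (hl t ht).1.1
      have h2 := (hl t' ht').1.1
      rw [heq] at h1
      exact Set.disjoint_left.1 (hdisj ht ht' hne) h1 h2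
  exact_mod_cast this

lemma encard_le_liminf (γ : ℝ → EuclideanSpace ℝ (Fin 3)) (hγ : Continuous γ)
    (u : sphere (0 : EuclideanSpace ℝ (Fin 3)) 1)
    (hu : ∀ a b : ℚ, ∀ t ∈ Icc (a : ℝ) b, ⟪γ t, (u : EuclideanSpace ℝ (Fin 3))⟫ = 0 →
        (∃ s ∈ Icc (a : ℝ) b, ⟪γ s, (u : EuclideanSpace ℝ (Fin 3))⟫ < 0) ∧
        (∃ s ∈ Icc (a : ℝ) b, 0 < ⟪γ s, (u : EuclideanSpace ℝ (Fin 3))⟫)) :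
    (({t ∈ Ico (0 : ℝ) 1 | ⟪γ t, (u : EuclideanSpace ℝ (Fin 3))⟫ = 0}).encard : ℝ≥0∞) ≤
      Filter.liminf (fun N : ℕ => signCount γ (unifP N) (N + 1) u) Filter.atTop := by
  have key : ∀ F : Finset ℝ,
      (F : Set ℝ) ⊆ {t ∈ Ico (0 : ℝ) 1 | ⟪γ t, (u : EuclideanSpace ℝ (Fin 3))⟫ = 0} →
      (F.card : ℝ≥0∞) ≤
        Filter.liminf (fun N : ℕ => signCount γ (unifP N) (N + 1) u) Filter.atTop :=
    fun F hF => Filter.le_liminf_of_le (by isBoundedDefault) (finset_le_signCount γ hγ u hu F hF)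
  generalize {t ∈ Ico (0 : ℝ) 1 | ⟪γ t, (u : EuclideanSpace ℝ (Fin 3))⟫ = 0} = S at *
  rcases S.finite_or_infinite with hS | hS
  · have := key hS.toFinset (by simp)
    rw [hS.encard_eq_coe_toFinset_card]
    simpa using this
  · rw [hS.encard_eq, ENat.toENNReal_top, top_le_iff]
    refine ENNReal.eq_top_of_forall_nnreal_le fun r => ?_
    obtain ⟨n, hn⟩ := exists_nat_ge r
    obtain ⟨F, hF, hc⟩ := hS.exists_subset_card_eq n
    have := key F hF
    rw [hc] at this
    exact le_trans (by exact_mod_cast hn) this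

lemma crofton_upper (γ : ℝ → EuclideanSpace ℝ (Fin 3)) (hγ : Continuous γ)
    (hs : ∀ t, ‖γ t‖ = 1) :
      ENNReal.ofReal Real.pi *
        ∫⁻ u : sphere (0 : EuclideanSpace ℝ (Fin 3)) 1,
          (({t ∈ Ico (0 : ℝ) 1 | ⟪γ t, (u : EuclideanSpace ℝ (Fin 3))⟫ = 0}).encard :
            ℝ≥0∞)
          ∂(volume : Measure (EuclideanSpace ℝ (Fin 3))).toSphere ≤
      eVariationOn γ (Icc (0 : ℝ) 1) *
        (volume : Measure (EuclideanSpace ℝ (Fin 3))).toSphere univ := by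
  set L := eVariationOn γ (Icc (0 : ℝ) 1)
  set σ := (volume : Measure (EuclideanSpace ℝ (Fin 3))).toSphere
  have h1 : ∫⁻ u : sphere (0 : EuclideanSpace ℝ (Fin 3)) 1,
          (({t ∈ Ico (0 : ℝ) 1 | ⟪γ t, (u : EuclideanSpace ℝ (Fin 3))⟫ = 0}).encard :
            ℝ≥0∞) ∂σ ≤
      Filter.liminf (fun N : ℕ => ∫⁻ u, signCount γ (unifP N) (N + 1) u ∂σ) Filter.atTop := by
    refine (lintegral_mono_ae ?_).trans
      (lintegral_liminf_le fun N => measurable_signCount γ (unifP N) (N + 1))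
    filter_upwards [generic γ hs] with u hu
    exact encard_le_liminf γ hγ u hu
  have h2 : ∀ c : ℝ, 0 < c → c < 1 → ∀ᶠ N : ℕ in Filter.atTop,
      ENNReal.ofReal c * (ENNReal.ofReal Real.pi * ∫⁻ u, signCount γ (unifP N) (N + 1) u ∂σ) ≤
        L * σ univ := by
    intro c hc0 hc1
    set δ := Real.sqrt (1 - c) with hδ
    have hδ0 : 0 < δ := Real.sqrt_pos.2 (by linarith)
    have hδ2 : 1 - δ ^ 2 = c := by rw [hδ, Real.sq_sqrt (by linarith)]; ring
    have huc : UniformContinuousOn γ (Icc 0 1) :=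
      isCompact_Icc.uniformContinuousOn_of_continuous hγ.continuousOn
    obtain ⟨η, hη, hη'⟩ := Metric.uniformContinuousOn_iff.1 huc δ hδ0
    have hlim := (tendsto_one_div_add_atTop_nhds_zero_nat (𝕜 := ℝ)).eventually (gt_mem_nhds hη)
    filter_upwards [hlim] with N hN
    have hmem : ∀ i ≤ N + 1, unifP N i ∈ Icc (0 : ℝ) 1 := by
      intro i hi
      unfold unifP
      refine ⟨by positivity, ?_⟩
      rw [div_le_one (by positivity)]
      exact_mod_cast hi
    rw [lintegral_signCount γ hs, ← mul_assoc, Finset.mul_sum]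
    gcongr
    refine le_trans (Finset.sum_le_sum fun i hi => ?_)
      (eVariationOn.sum_le_of_monotoneOn_Iic (u := unifP N) (n := N + 1) ?_ hmem)
    · have hi' := Finset.mem_range.1 hi
      rw [edist_comm, edist_dist, ← ENNReal.ofReal_mul hc0.le, ← hδ2]
      apply ENNReal.ofReal_le_ofReal
      apply angle_le_chord _ _ (hs _) (hs _)
      apply le_of_lt
      apply hη' _ (hmem i (by omega)) _ (hmem (i + 1) (by omega))
      rw [Real.dist_eq, abs_sub_comm, abs_of_nonneg]
      · refine lt_of_le_of_lt (le_of_eq ?_) hN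
        unfold unifP
        push_cast
        ring
      · unfold unifP
        rw [sub_nonneg]
        gcongr
        simp
    · intro i _ j _ hij
      unfold unifP
      gcongr
  refine ENNReal.le_of_forall_lt_one_mul_le fun a ha => ?_
  rcases eq_or_ne a 0 with rfl | ha0
  · simp
  have hatop : a ≠ ⊤ := (ha.trans ENNReal.one_lt_top).ne
  have hpos : 0 < a.toReal := ENNReal.toReal_pos ha0 hatop
  have hlt : a.toReal < 1 := by
    rw [← ENNReal.toReal_one]
    exact (ENNReal.toReal_lt_toReal hatop ENNReal.one_ne_top).2 ha
  have h3 := h2 a.toReal hpos hlt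
  rw [ENNReal.ofReal_toReal hatop] at h3
  have hk0 : a * ENNReal.ofReal Real.pi ≠ 0 := mul_ne_zero ha0 (by simp [Real.pi_pos])
  have hkt : a * ENNReal.ofReal Real.pi ≠ ⊤ := ENNReal.mul_ne_top hatop ENNReal.ofReal_ne_top
  have h4 : Filter.liminf (fun N : ℕ => ∫⁻ u, signCount γ (unifP N) (N + 1) u ∂σ) Filter.atTop ≤
      (L * σ univ) / (a * ENNReal.ofReal Real.pi) := by
    refine Filter.liminf_le_of_frequently_le' (Filter.Eventually.frequently ?_)
    filter_upwards [h3] with N hN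
    rw [ENNReal.le_div_iff_mul_le (Or.inl hk0) (Or.inl hkt), mul_comm, mul_assoc]
    exact hN
  have h5 := h1.trans h4
  rw [ENNReal.le_div_iff_mul_le (Or.inl hk0) (Or.inl hkt), mul_comm, mul_assoc] at h5
  exact h5

/-- **Crofton formula on the sphere.** The length of a closed
rectifiable curve on the unit sphere `S² ⊆ ℝ³` equals `π` times the average,
over the uniform (normalized) measure on unit vectors `u`, of the number of
intersections of the curve with the great circle `u^⊥ ∩ S²`, i.e. the number of
zeros of `t ↦ ⟪γ t, u⟫` on one period. Equivalently (clearing the normalization),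
`length(γ) · σ(S²) = π · ∫ n(u) dσ(u)` for the uniform measure `σ` on `S²`. -/
theorem spherical_crofton
    (γ : ℝ → EuclideanSpace ℝ (Fin 3))
    (hγ : Continuous γ) (hper : Function.Periodic γ 1)
    (hsph : Set.range γ ⊆ sphere (0 : EuclideanSpace ℝ (Fin 3)) 1)
    (hrect : eVariationOn γ (Icc (0 : ℝ) 1) ≠ ⊤) :
    eVariationOn γ (Icc (0 : ℝ) 1) *
        (volume : Measure (EuclideanSpace ℝ (Fin 3))).toSphere univ =
      ENNReal.ofReal Real.pi *
        ∫⁻ u : sphere (0 : EuclideanSpace ℝ (Fin 3)) 1,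
          (({t ∈ Ico (0 : ℝ) 1 | ⟪γ t, (u : EuclideanSpace ℝ (Fin 3))⟫ = 0}).encard :
            ℝ≥0∞)
          ∂(volume : Measure (EuclideanSpace ℝ (Fin 3))).toSphere := by
  have hs : ∀ t, ‖γ t‖ = 1 := fun t => by
    simpa using hsph (Set.mem_range_self t)
  exact le_antisymm (crofton_lower γ hγ hs) (crofton_upper γ hγ hs)
end
end
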